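/- arXiv:1105.3895 — 6 statements merged into one kernel-verified Lean document; each statement's English description precedes it below -/
import Mathlib

section
/- There is an absolute constant C such that for every integer n ≥ 3 there exists an infinitely differentiable 1-periodic function h : ℝ → ℝ with 0 ≤ h ≤ 1, h(t) = 1 for all t ∈ [1/n, 1/2 − 1/n], h(t) = 0 for all t ∈ [1/2, 1], ∑_{b∈ℤ} |ĥ(b)| ≤ C log n, and ∑_{|b| > n³} |ĥ(b)| ≤ 2^{−n}, where ĥ(b) = ∫₀¹ h(t) e^{−2πibt} dt. -/
/-- The `b`-th Fourier coefficient `∫₀¹ h(t) e^{-2πibt} dt` of a 1-periodic function. -/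
noncomputable def fourierCoeff01 (h : ℝ → ℂ) (b : ℤ) : ℂ :=
  ∫ t in (0:ℝ)..1, h t * Complex.exp (-(2 * Real.pi * Complex.I * b * t))

/-!
Let `H` be a smooth step, rising from `0` to `1` over an interval of length `1 / n`. The difference
`H(t) - H(t - w)` with `w = 1/2 - 1/n` is a plateau supported in `[0, 1/2]`, and its periodization
has Fourier coefficients bounded by `|𝓕 H'(b)| / (π|b|)`. As `H` is monotone, `|𝓕 H'| ≤ 1`, so the
coefficients are `O(1/|b|)`, and those with `|b| ≤ n³` add up to `O(log n)`.

Averaging a step over a window of length `δ` keeps it a step, lengthens its rise by `δ`, and divides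
`|𝓕 H'(x)|` by at least `π|x|δ`. Starting with a rise of length `1/(2n)`, there is room for `n`
averages with `δ = 1/(2n²)`, after which `|𝓕 H'(b)| ≤ (2n²/(π|b|))ⁿ`. For `|b| > n³` the base is at
most `1/4`, which makes the tail exponentially small.
-/

open MeasureTheory Set Filter Topology FourierTransform

/-- The backward difference `f(t) - f(t - w)` with step `w`. If `f` climbs from `0` to `1`, this is
a plateau of width `w`. -/
def backwardDiff {V E : Type*} [Sub V] [Sub E] (w : V) (f : V → E) (t : V) : E :=
  f t - f (t - w)

/-- The average of `f` over the window `[t - w, t]`; it is `0` for `w = 0`. -/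
noncomputable def movingAverage (w : ℝ) (f : ℝ → ℝ) (t : ℝ) : ℝ :=
  w⁻¹ * ∫ s in (t - w)..t, f s

lemma deriv_backwardDiff {E : Type*} [NormedAddCommGroup E] [NormedSpace ℝ E]
    {f : ℝ → E} (hf : Differentiable ℝ f) (w : ℝ) :
    deriv (backwardDiff w f) = backwardDiff w (deriv f) := by
  ext t
  exact ((hf t).hasDerivAt.sub ((hf (t - w)).hasDerivAt.comp_sub_const t w)).deriv

lemma contDiff_backwardDiff {E : Type*} [NormedAddCommGroup E] [NormedSpace ℝ E]
    {n : WithTop ℕ∞} {f : ℝ → E} (hf : ContDiff ℝ n f) (w : ℝ) :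
    ContDiff ℝ n (backwardDiff w f) :=
  hf.sub (hf.comp (contDiff_id.sub contDiff_const))

section Fourier

variable {V E : Type*} [NormedAddCommGroup E] [NormedSpace ℂ E]
  [NormedAddCommGroup V] [InnerProductSpace ℝ V] [FiniteDimensional ℝ V]
  [MeasurableSpace V] [BorelSpace V]

lemma norm_fourier_le_integral_norm (f : V → E) (x : V) : ‖𝓕 f x‖ ≤ ∫ v, ‖f v‖ :=
  VectorFourier.norm_fourierIntegral_le_integral_norm _ _ _ f x

lemma norm_fourier_comp_sub_right (f : V → E) (w x : V) :
    ‖𝓕 (fun v => f (v - w)) x‖ = ‖𝓕 f x‖ := by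
  have hphase := congrFun
    (VectorFourier.fourierIntegral_comp_add_right Real.fourierChar volume (innerₗ V) f (-w)) x
  simp only [Function.comp_def, ← sub_eq_add_neg] at hphase
  exact (congrArg norm hphase).trans (Circle.norm_smul _ _)

lemma norm_fourier_backwardDiff_le {f : V → E} (hf : Integrable f) (w x : V) :
    ‖𝓕 (backwardDiff w f) x‖ ≤ 2 * ‖𝓕 f x‖ := by
  have hsub : 𝓕 (backwardDiff w f) x = 𝓕 f x - 𝓕 (fun v => f (v - w)) x := by
    simp only [Real.fourier_eq, backwardDiff, smul_sub]
    exact integral_sub ((Real.fourierIntegral_convergent_iff x).2 hf)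
      ((Real.fourierIntegral_convergent_iff x).2 (hf.comp_sub_right w))
  calc ‖𝓕 (backwardDiff w f) x‖ ≤ ‖𝓕 f x‖ + ‖𝓕 (fun v => f (v - w)) x‖ :=
        hsub ▸ norm_sub_le _ _
    _ = 2 * ‖𝓕 f x‖ := by rw [norm_fourier_comp_sub_right, two_mul]

lemma norm_fourier_deriv {f : ℝ → E} (hf : Integrable f) (hfd : Differentiable ℝ f)
    (hf' : Integrable (deriv f)) (x : ℝ) :
    ‖𝓕 (deriv f) x‖ = 2 * Real.pi * |x| * ‖𝓕 f x‖ := by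
  rw [Real.fourier_deriv hf hfd hf', norm_smul]
  simp [abs_of_pos Real.pi_pos]

lemma pi_mul_abs_mul_norm_fourier_backwardDiff_le {f : ℝ → E} {w : ℝ}
    (hf : Differentiable ℝ f) (hf' : Integrable (deriv f)) (hdiff : Integrable (backwardDiff w f))
    (x : ℝ) : Real.pi * |x| * ‖𝓕 (backwardDiff w f) x‖ ≤ ‖𝓕 (deriv f) x‖ := by
  have hd : Differentiable ℝ (backwardDiff w f) :=
    hf.sub (hf.comp (differentiable_id.sub_const w))
  have hd' : Integrable (deriv (backwardDiff w f)) := by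
    rw [deriv_backwardDiff hf]
    exact hf'.sub (hf'.comp_sub_right w)
  have hnorm := norm_fourier_deriv hdiff hd hd' x
  rw [deriv_backwardDiff hf] at hnorm
  linarith [norm_fourier_backwardDiff_le hf' w x]

end Fourier

lemma hasDerivAt_movingAverage {f : ℝ → ℝ} (hf : Continuous f) (w t : ℝ) :
    HasDerivAt (movingAverage w f) (w⁻¹ * backwardDiff w f t) t := by
  have hprim (s : ℝ) : HasDerivAt (fun s => ∫ x in (0 : ℝ)..s, f x) (f s) s :=
    hf.integral_hasStrictDerivAt 0 s |>.hasDerivAt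
  have hsplit : movingAverage w f =
      fun s => w⁻¹ * ((∫ x in (0 : ℝ)..s, f x) - ∫ x in (0 : ℝ)..(s - w), f x) := by
    ext s
    rw [movingAverage, intervalIntegral.integral_interval_sub_left]
      <;> exact hf.intervalIntegrable _ _
  rw [hsplit]
  exact ((hprim t).sub ((hprim (t - w)).comp_sub_const t w)).const_mul _

lemma deriv_movingAverage {f : ℝ → ℝ} (hf : Continuous f) (w : ℝ) :
    deriv (movingAverage w f) = fun t => w⁻¹ * backwardDiff w f t :=
  funext fun t => (hasDerivAt_movingAverage hf w t).deriv

lemma movingAverage_eq_of_forall_mem_Icc {f : ℝ → ℝ} {w t c : ℝ} (hw : 0 < w)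
    (hf : ∀ s ∈ Icc (t - w) t, f s = c) : movingAverage w f t = c := by
  have hconst : ∫ s in (t - w)..t, f s = ∫ _ in (t - w)..t, c :=
    intervalIntegral.integral_congr fun s hs => hf s (by rwa [uIcc_of_le (by linarith)] at hs)
  rw [movingAverage, hconst, intervalIntegral.integral_const, sub_sub_cancel, smul_eq_mul,
    inv_mul_cancel_left₀ hw.ne']


/-- `H` is a smooth nondecreasing function that is `0` on `(-∞, 0]` and `1` on `[a, ∞)`. -/
structure SmoothStep (a : ℝ) (H : ℝ → ℝ) : Prop where
  contDiff : ContDiff ℝ (⊤ : ℕ∞) H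
  monotone : Monotone H
  eq_zero : ∀ t ≤ 0, H t = 0
  eq_one : ∀ t, a ≤ t → H t = 1

lemma smoothStep_smoothTransition_div {a : ℝ} (ha : 0 < a) :
    SmoothStep a fun t => Real.smoothTransition (t / a) where
  contDiff := Real.smoothTransition.contDiff.comp (contDiff_id.div_const a)
  monotone _ _ hst := Real.smoothTransition.monotone (by gcongr)
  eq_zero _ ht := Real.smoothTransition.zero_of_nonpos (div_nonpos_of_nonpos_of_nonneg ht ha.le)
  eq_one _ ht := Real.smoothTransition.one_of_one_le ((one_le_div ha).2 ht)

namespace SmoothStep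

variable {H : ℝ → ℝ} {a w : ℝ}

lemma nonneg (hH : SmoothStep a H) (t : ℝ) : 0 ≤ H t :=
  hH.eq_zero (min t 0) (min_le_right _ _) ▸ hH.monotone (min_le_left _ _)

lemma le_one (hH : SmoothStep a H) (t : ℝ) : H t ≤ 1 :=
  hH.eq_one (max t a) (le_max_right _ _) ▸ hH.monotone (le_max_left _ _)

lemma differentiable (hH : SmoothStep a H) : Differentiable ℝ H :=
  hH.contDiff.differentiable (by simp)

lemma deriv_eq_zero_of_notMem_Icc (hH : SmoothStep a H) {t : ℝ} (ht : t ∉ Icc 0 a) :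
    deriv H t = 0 := by
  rw [mem_Icc, not_and_or, not_le, not_le] at ht
  obtain hneg | hgt := ht
  · have : H =ᶠ[𝓝 t] fun _ => 0 := by
      filter_upwards [Iio_mem_nhds hneg] with s hs using hH.eq_zero s hs.le
    rw [this.deriv_eq, deriv_const]
  · have : H =ᶠ[𝓝 t] fun _ => 1 := by
      filter_upwards [Ioi_mem_nhds hgt] with s hs using hH.eq_one s hs.le
    rw [this.deriv_eq, deriv_const]

lemma integrable_deriv (hH : SmoothStep a H) : Integrable (deriv H) :=
  (hH.contDiff.continuous_deriv (by simp)).integrable_of_hasCompactSupport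
    (.intro isCompact_Icc fun _ => hH.deriv_eq_zero_of_notMem_Icc)

lemma integral_deriv (hH : SmoothStep a H) : ∫ t, deriv H t = 1 := by
  have hbot : Tendsto H atBot (𝓝 0) := tendsto_const_nhds.congr' <| by
    filter_upwards [eventually_le_atBot 0] with t ht using (hH.eq_zero t ht).symm
  have htop : Tendsto H atTop (𝓝 1) := tendsto_const_nhds.congr' <| by
    filter_upwards [eventually_ge_atTop a] with t ht using (hH.eq_one t ht).symm
  simpa using integral_of_hasDerivAt_of_tendsto (fun t => (hH.differentiable t).hasDerivAt)
    hH.integrable_deriv hbot htop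

lemma norm_fourier_deriv_le_one (hH : SmoothStep a H) (x : ℝ) :
    ‖𝓕 (fun t => ((deriv H t : ℝ) : ℂ)) x‖ ≤ 1 := by
  calc ‖𝓕 (fun t => ((deriv H t : ℝ) : ℂ)) x‖ ≤ ∫ t, ‖((deriv H t : ℝ) : ℂ)‖ :=
        norm_fourier_le_integral_norm _ x
    _ = ∫ t, deriv H t := by
        simp only [Complex.norm_real, Real.norm_of_nonneg hH.monotone.deriv_nonneg]
    _ = 1 := hH.integral_deriv

lemma backwardDiff_nonneg (hH : SmoothStep a H) (hw : 0 ≤ w) (t : ℝ) : 0 ≤ backwardDiff w H t :=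
  sub_nonneg.2 (hH.monotone (sub_le_self t hw))

lemma backwardDiff_le_one (hH : SmoothStep a H) (w t : ℝ) : backwardDiff w H t ≤ 1 :=
  (sub_le_self _ (hH.nonneg _)).trans (hH.le_one t)

lemma backwardDiff_eq_one (hH : SmoothStep a H) {t : ℝ} (ht : t ∈ Icc a w) :
    backwardDiff w H t = 1 := by
  rw [backwardDiff, hH.eq_one t ht.1, hH.eq_zero (t - w) (sub_nonpos.2 ht.2), sub_zero]

lemma support_backwardDiff_subset (hH : SmoothStep a H) (hw : 0 ≤ w) :
    Function.support (backwardDiff w H) ⊆ Ioo 0 (a + w) := by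
  refine fun t ht => ⟨?_, ?_⟩ <;> contrapose! ht <;> rw [Function.notMem_support, backwardDiff]
  · rw [hH.eq_zero t ht, hH.eq_zero (t - w) (by linarith), sub_zero]
  · rw [hH.eq_one t (by linarith), hH.eq_one (t - w) (by linarith), sub_self]

lemma integrable_backwardDiff (hH : SmoothStep a H) (hw : 0 ≤ w) :
    Integrable (backwardDiff w H) :=
  (contDiff_backwardDiff hH.contDiff w).continuous.integrable_of_hasCompactSupport <|
    .of_support_subset_isCompact isCompact_Icc
      ((hH.support_backwardDiff_subset hw).trans Ioo_subset_Icc_self)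

lemma pi_mul_abs_mul_norm_fourier_backwardDiff_le (hH : SmoothStep a H) (hw : 0 ≤ w) (x : ℝ) :
    Real.pi * |x| * ‖𝓕 (fun t => ((backwardDiff w H t : ℝ) : ℂ)) x‖ ≤
      ‖𝓕 (fun t => ((deriv H t : ℝ) : ℂ)) x‖ := by
  have hd (t : ℝ) : HasDerivAt (fun t => (H t : ℂ)) ((deriv H t : ℝ) : ℂ) t :=
    (hH.differentiable t).hasDerivAt.ofReal_comp
  have hderiv : deriv (fun t => (H t : ℂ)) = fun t => ((deriv H t : ℝ) : ℂ) :=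
    funext fun t => (hd t).deriv
  have hdiff : backwardDiff w (fun t => (H t : ℂ)) = fun t => ((backwardDiff w H t : ℝ) : ℂ) :=
    funext fun t => (Complex.ofReal_sub _ _).symm
  rw [← hderiv, ← hdiff]
  exact _root_.pi_mul_abs_mul_norm_fourier_backwardDiff_le (fun t => (hd t).differentiableAt)
    (hderiv ▸ hH.integrable_deriv.ofReal) (hdiff ▸ (hH.integrable_backwardDiff hw).ofReal) x

protected lemma movingAverage (hH : SmoothStep a H) (hw : 0 < w) :
    SmoothStep (a + w) (movingAverage w H) where
  contDiff := by
    rw [contDiff_infty_iff_deriv, deriv_movingAverage hH.contDiff.continuous]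
    exact ⟨fun t => (hasDerivAt_movingAverage hH.contDiff.continuous w t).differentiableAt,
      contDiff_const.mul (contDiff_backwardDiff hH.contDiff w)⟩
  monotone :=
    monotone_of_hasDerivAt_nonneg (hasDerivAt_movingAverage hH.contDiff.continuous w) fun t =>
      mul_nonneg (inv_nonneg.2 hw.le) (hH.backwardDiff_nonneg hw.le t)
  eq_zero t ht := movingAverage_eq_of_forall_mem_Icc hw fun s hs => hH.eq_zero s (hs.2.trans ht)
  eq_one t ht := movingAverage_eq_of_forall_mem_Icc hw fun s hs => hH.eq_one s (by linarith [hs.1])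

lemma norm_fourier_deriv_movingAverage_le (hH : SmoothStep a H) (hw : 0 < w) {x : ℝ}
    (hx : x ≠ 0) : ‖𝓕 (fun t => ((deriv (movingAverage w H) t : ℝ) : ℂ)) x‖ ≤
      1 / (Real.pi * |x| * w) * ‖𝓕 (fun t => ((deriv H t : ℝ) : ℂ)) x‖ := by
  have hscale : 𝓕 (fun t => ((deriv (movingAverage w H) t : ℝ) : ℂ)) x =
      (w⁻¹ : ℂ) * 𝓕 (fun t => ((backwardDiff w H t : ℝ) : ℂ)) x := by
    simp only [deriv_movingAverage hH.contDiff.continuous, Complex.ofReal_mul, Complex.ofReal_inv]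
    exact congrFun (VectorFourier.fourierIntegral_const_smul _ _ _ _ (w⁻¹ : ℂ)) x
  have hbound := hH.pi_mul_abs_mul_norm_fourier_backwardDiff_le hw.le x
  have hpos : 0 < Real.pi * |x| := mul_pos Real.pi_pos (abs_pos.2 hx)
  rw [hscale, norm_mul, norm_inv, Complex.norm_real, Real.norm_of_nonneg hw.le]
  calc w⁻¹ * ‖𝓕 (fun t => ((backwardDiff w H t : ℝ) : ℂ)) x‖
      ≤ w⁻¹ * (‖𝓕 (fun t => ((deriv H t : ℝ) : ℂ)) x‖ / (Real.pi * |x|)) := by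
        gcongr
        rwa [le_div_iff₀' hpos]
    _ = 1 / (Real.pi * |x| * w) * ‖𝓕 (fun t => ((deriv H t : ℝ) : ℂ)) x‖ := by field_simp

lemma iterate_movingAverage (hH : SmoothStep a H) (hw : 0 < w) (k : ℕ) :
    SmoothStep (a + k * w) ((movingAverage w)^[k] H) := by
  induction k with
  | zero => simpa using hH
  | succ k ih =>
    rw [Function.iterate_succ_apply', Nat.cast_succ, add_one_mul, ← add_assoc]
    exact ih.movingAverage hw

lemma norm_fourier_deriv_iterate_movingAverage_le (hH : SmoothStep a H) (hw : 0 < w) {x : ℝ}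
    (hx : x ≠ 0) (k : ℕ) :
    ‖𝓕 (fun t => ((deriv ((movingAverage w)^[k] H) t : ℝ) : ℂ)) x‖ ≤
      (1 / (Real.pi * |x| * w)) ^ k := by
  induction k with
  | zero => simpa using hH.norm_fourier_deriv_le_one x
  | succ k ih =>
    rw [Function.iterate_succ_apply', pow_succ']
    have := Real.pi_pos
    exact ((hH.iterate_movingAverage hw k).norm_fourier_deriv_movingAverage_le hw hx).trans
      (by gcongr)

end SmoothStep

section Periodization

lemma contDiff_comp_fract {E : Type*} [NormedAddCommGroup E] [NormedSpace ℝ E] {n : WithTop ℕ∞}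
    {g : ℝ → E} {c : ℝ} (hc : c < 1) (hg : ContDiff ℝ n g)
    (hsupp : Function.support g ⊆ Icc 0 c) : ContDiff ℝ n (fun t => g (Int.fract t)) := by
  have hzero {t : ℝ} (ht : t ∉ Icc 0 c) : g t = 0 := Function.notMem_support.1 fun h => ht (hsupp h)
  have hlocal (k : ℤ) {t : ℝ} (ht : t ∈ Ioo (k - 1 + max c 0) (k + 1)) :
      g (Int.fract t) = g (t - k) := by
    obtain hk | hk := le_or_gt (k : ℝ) t
    · rw [Int.fract, Int.floor_eq_iff.2 ⟨hk, ht.2⟩]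
    · have hfloor : ⌊t⌋ = k - 1 :=
        Int.floor_eq_iff.2 ⟨by push_cast; linarith [ht.1, le_max_right c 0], by push_cast; linarith⟩
      rw [Int.fract, hfloor, hzero, hzero]
      · exact fun h => by linarith [h.1]
      · push_cast
        exact fun h => by linarith [h.2, ht.1, le_max_left c 0]
  refine contDiff_iff_contDiffAt.2 fun t => ?_
  have hshift : ContDiffAt ℝ n (fun s => g (s - ⌊t⌋)) t :=
    (hg.comp (contDiff_id.sub contDiff_const)).contDiffAt
  refine hshift.congr_of_eventuallyEq ?_
  have hleft : (⌊t⌋ : ℝ) - 1 + max c 0 < t := by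
    linarith [Int.floor_le t, max_lt hc zero_lt_one]
  filter_upwards [Ioo_mem_nhds hleft (Int.lt_floor_add_one t)] with s hs
  exact hlocal _ hs

lemma comp_fract_eq_self {E : Type*} [Zero E] {g : ℝ → E} (hsupp : Function.support g ⊆ Ioo 0 1)
    {t : ℝ} (ht : t ∈ Icc 0 1) : g (Int.fract t) = g t := by
  obtain rfl | hlt := eq_or_lt_of_le ht.2
  · have hzero {t : ℝ} (ht : t ∉ Ioo 0 1) : g t = 0 :=
      Function.notMem_support.1 fun h => ht (hsupp h)
    rw [Int.fract_one, hzero (by simp), hzero (by simp)]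
  · rw [Int.fract_eq_self.2 ⟨ht.1, hlt⟩]

lemma fourierCoeff01_comp_fract {g : ℝ → ℂ} (hsupp : Function.support g ⊆ Ioo 0 1) (b : ℤ) :
    fourierCoeff01 (fun t => g (Int.fract t)) b = 𝓕 g b := by
  rw [fourierCoeff01, Real.fourier_real_eq_integral_exp_smul,
    ← intervalIntegral.integral_eq_integral_of_support_subset (a := 0) (b := 1)]
  · refine intervalIntegral.integral_congr fun t ht => ?_
    rw [uIcc_of_le zero_le_one] at ht
    simp only [comp_fract_eq_self hsupp ht, smul_eq_mul]
    rw [mul_comm]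
    congr 2
    push_cast
    ring
  · exact fun t ht => Ioo_subset_Ioc_self (hsupp (right_ne_zero_of_smul ht))

lemma norm_fourierCoeff01_le {h : ℝ → ℂ} {M : ℝ} (hM : ∀ t ∈ Ioc 0 1, ‖h t‖ ≤ M) (b : ℤ) :
    ‖fourierCoeff01 h b‖ ≤ M := by
  have hexp (t : ℝ) : ‖Complex.exp (-(2 * Real.pi * Complex.I * b * t))‖ = 1 := by
    simp [Complex.norm_exp]
  have hbound := intervalIntegral.norm_integral_le_of_norm_le_const (a := 0) (b := 1) (C := M)
    (f := fun t => h t * Complex.exp (-(2 * Real.pi * Complex.I * b * t))) fun t ht => by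
      rw [norm_mul, hexp, mul_one]
      exact hM t (by rwa [uIoc_of_le zero_le_one] at ht)
  simpa [fourierCoeff01] using hbound

lemma SmoothStep.pi_mul_abs_mul_norm_fourierCoeff01_le {H : ℝ → ℝ} {a w : ℝ}
    (hH : SmoothStep a H) (hw : 0 ≤ w) (haw : a + w ≤ 1) (b : ℤ) :
    Real.pi * |(b : ℝ)| * ‖fourierCoeff01 (fun t => ((backwardDiff w H (Int.fract t) : ℝ) : ℂ)) b‖ ≤
      ‖𝓕 (fun t => ((deriv H t : ℝ) : ℂ)) (b : ℝ)‖ := by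
  have hsupp : Function.support (fun t => ((backwardDiff w H t : ℝ) : ℂ)) ⊆ Ioo 0 1 := by
    refine fun t ht => Ioo_subset_Ioo_right haw (hH.support_backwardDiff_subset hw ?_)
    exact fun h0 => ht (Complex.ofReal_eq_zero.2 h0)
  rw [fourierCoeff01_comp_fract hsupp]
  exact hH.pi_mul_abs_mul_norm_fourier_backwardDiff_le hw b

end Periodization

section Sums

lemma sum_Icc_neg_inv_abs_le (N : ℕ) :
    ∑ b ∈ Finset.Icc (-N : ℤ) N, |(b : ℝ)|⁻¹ ≤ 2 * (1 + Real.log N) := by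
  have heven : Function.Even fun b : ℤ => |(b : ℝ)|⁻¹ := fun b => by simp
  have hharmonic : ∑ k ∈ Finset.range (N + 1), |((k : ℤ) : ℝ)|⁻¹ = (harmonic N : ℝ) := by
    simp [Finset.sum_range_succ', harmonic]
  rw [Finset.sum_Icc_of_even_eq_range heven, hharmonic]
  simpa using harmonic_le_one_add_log N

lemma sum_ite_lt_abs_inv_sq_le {N : ℕ} (hN : N ≠ 0) (s : Finset ℤ) :
    ∑ b ∈ s, (if (N : ℤ) < |b| then ((b : ℝ) ^ 2)⁻¹ else 0) ≤ 2 * (N : ℝ)⁻¹ := by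
  set M := max (s.sup Int.natAbs) N
  have hsub : s ⊆ Finset.Icc (-M : ℤ) M := fun b hb => by
    have : b.natAbs ≤ M := (Finset.le_sup hb).trans (le_max_left _ _)
    rw [Finset.mem_Icc]
    omega
  have heven : Function.Even fun b : ℤ => if (N : ℤ) < |b| then ((b : ℝ) ^ 2)⁻¹ else 0 :=
    fun b => by simp
  have hfilter : (Finset.range (M + 1)).filter (N < ·) = Finset.Ioc N M := by
    ext k
    simp only [Finset.mem_filter, Finset.mem_range, Finset.mem_Ioc]
    omega
  calc ∑ b ∈ s, (if (N : ℤ) < |b| then ((b : ℝ) ^ 2)⁻¹ else 0)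
      ≤ ∑ b ∈ Finset.Icc (-M : ℤ) M, (if (N : ℤ) < |b| then ((b : ℝ) ^ 2)⁻¹ else 0) :=
        Finset.sum_le_sum_of_subset_of_nonneg hsub fun b _ _ => by positivity
    _ = 2 * ∑ k ∈ Finset.Ioc N M, ((k : ℝ) ^ 2)⁻¹ := by
        rw [Finset.sum_Icc_of_even_eq_range heven, ← hfilter, Finset.sum_filter]
        simp
    _ ≤ 2 * (N : ℝ)⁻¹ := by
        have := sum_Ioc_inv_sq_le_sub (α := ℝ) hN (le_max_right (s.sup Int.natAbs) N)
        gcongr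
        exact this.trans (sub_le_self _ (by positivity))

variable {f : ℤ → ℝ} {N : ℕ} {D : ℝ}

lemma sum_ite_lt_abs_le (hN : N ≠ 0) (hD : 0 ≤ D)
    (hf : ∀ b : ℤ, (N : ℤ) < |b| → f b ≤ D * ((b : ℝ) ^ 2)⁻¹) (s : Finset ℤ) :
    ∑ b ∈ s, (if (N : ℤ) < |b| then f b else 0) ≤ 2 * D / N := by
  calc ∑ b ∈ s, (if (N : ℤ) < |b| then f b else 0)
      ≤ ∑ b ∈ s, D * (if (N : ℤ) < |b| then ((b : ℝ) ^ 2)⁻¹ else 0) := by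
        refine Finset.sum_le_sum fun b _ => ?_
        split_ifs with hb
        exacts [hf b hb, (mul_zero D).ge]
    _ ≤ D * (2 * (N : ℝ)⁻¹) := by
        rw [← Finset.mul_sum]
        exact mul_le_mul_of_nonneg_left (sum_ite_lt_abs_inv_sq_le hN s) hD
    _ = 2 * D / N := by ring

lemma sum_Icc_neg_le_zero_add_log (hf : ∀ b ≠ 0, f b ≤ |(b : ℝ)|⁻¹) (N : ℕ) :
    ∑ b ∈ Finset.Icc (-N : ℤ) N, f b ≤ f 0 + 2 * (1 + Real.log N) := by
  set I := Finset.Icc (-N : ℤ) N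
  have h0 : (0 : ℤ) ∈ I := by simp [I]
  calc ∑ b ∈ I, f b = f 0 + ∑ b ∈ I.erase 0, f b := (Finset.add_sum_erase I f h0).symm
    _ ≤ f 0 + ∑ b ∈ I.erase 0, |(b : ℝ)|⁻¹ := by
        gcongr with b hb
        exact hf b (Finset.ne_of_mem_erase hb)
    _ = f 0 + ∑ b ∈ I, |(b : ℝ)|⁻¹ := by rw [Finset.sum_erase _ (by simp)]
    _ ≤ f 0 + 2 * (1 + Real.log N) := by gcongr; exact sum_Icc_neg_inv_abs_le N

lemma tsum_le_zero_add_log_add_tail (hf : ∀ b ≠ 0, f b ≤ |(b : ℝ)|⁻¹)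
    (htail : Summable fun b : ℤ => if (N : ℤ) < |b| then f b else 0) :
    ∑' b, f b ≤ f 0 + 2 * (1 + Real.log N) + ∑' b : ℤ, if (N : ℤ) < |b| then f b else 0 := by
  set I := Finset.Icc (-N : ℤ) N
  have hhead : HasSum (fun b => if b ∈ I then f b else 0) (∑ b ∈ I, f b) := by
    simpa using hasSum_sum_of_ne_finset_zero (s := I) (f := fun b => if b ∈ I then f b else 0)
      fun b hb => if_neg hb
  have hsplit : f = fun b => (if b ∈ I then f b else 0) + if (N : ℤ) < |b| then f b else 0 := by
    ext b
    have : b ∈ I ↔ ¬ (N : ℤ) < |b| := by rw [Finset.mem_Icc, not_lt, abs_le]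
    by_cases hb : (N : ℤ) < |b| <;> simp [this, hb]
  calc ∑' b, f b = ∑ b ∈ I, f b + ∑' b : ℤ, if (N : ℤ) < |b| then f b else 0 := by
        conv_lhs => rw [hsplit]
        exact (hhead.add htail.hasSum).tsum_eq
    _ ≤ _ := by gcongr; exact sum_Icc_neg_le_zero_add_log hf N

end Sums

/-- The step of width `1 / n` from which the cutoff is built: a transition of width `1 / (2n)`
followed by `n` moving averages over windows of length `1 / (2n²)`. -/
noncomputable def cutoffStep (n : ℕ) : ℝ → ℝ :=
  (movingAverage (1 / (2 * n ^ 2)))^[n] fun t => Real.smoothTransition (t / (1 / (2 * n)))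

/-- The 1-periodic cutoff of the theorem: on `[0, 1]` it climbs along `cutoffStep n` from `0` at `0`
and descends along the translate of the same step to `0` at `1 / 2`. -/
noncomputable def cutoff (n : ℕ) (t : ℝ) : ℝ :=
  backwardDiff (1 / 2 - 1 / (n : ℝ)) (cutoffStep n) (Int.fract t)

lemma smoothStep_cutoffStep {n : ℕ} (hn : n ≠ 0) : SmoothStep (1 / n) (cutoffStep n) := by
  have hwidth : (1 / n : ℝ) = 1 / (2 * n) + n * (1 / (2 * n ^ 2)) := by
    field_simp
    norm_num
  rw [hwidth]
  exact (smoothStep_smoothTransition_div (by positivity)).iterate_movingAverage (by positivity) n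

lemma norm_fourier_deriv_cutoffStep_le {n : ℕ} (hn : n ≠ 0) {x : ℝ} (hx : x ≠ 0) :
    ‖𝓕 (fun t => ((deriv (cutoffStep n) t : ℝ) : ℂ)) x‖ ≤
      (2 * n ^ 2 / (Real.pi * |x|)) ^ n := by
  have hbase : (2 * n ^ 2 / (Real.pi * |x|) : ℝ) = 1 / (Real.pi * |x| * (1 / (2 * n ^ 2))) := by
    field_simp
  rw [hbase]
  have hstep : SmoothStep (1 / (2 * n)) fun t => Real.smoothTransition (t / (1 / (2 * n))) :=
    smoothStep_smoothTransition_div (by positivity)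
  exact hstep.norm_fourier_deriv_iterate_movingAverage_le (by positivity) hx n

lemma pow_succ_div_le_of_div_le {q y r : ℝ} (hq : 0 ≤ q) (hy : 0 < y) (hr : q / y ≤ r) (k : ℕ) :
    (q / y) ^ (k + 1) / y ≤ r ^ k * q / y ^ 2 := by
  calc (q / y) ^ (k + 1) / y = (q / y) ^ k * q / y ^ 2 := by
        rw [pow_succ]
        field_simp
    _ ≤ r ^ k * q / y ^ 2 := by gcongr

lemma two_mul_sq_div_pi_mul_le {n : ℕ} (hn : 3 ≤ n) {y : ℝ} (hy : (n : ℝ) ^ 3 ≤ y) :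
    2 * (n : ℝ) ^ 2 / (Real.pi * y) ≤ 1 / 4 := by
  have hn' : (3 : ℝ) ≤ n := by exact_mod_cast hn
  have hy0 : 0 < y := lt_of_lt_of_le (by positivity) hy
  rw [div_le_iff₀ (mul_pos Real.pi_pos hy0)]
  calc 2 * (n : ℝ) ^ 2 ≤ 1 / 4 * (3 * (3 * n ^ 2)) := by linarith [sq_nonneg (n : ℝ)]
    _ ≤ 1 / 4 * (3 * ((n : ℝ) * n ^ 2)) := by gcongr
    _ = 1 / 4 * (3 * (n : ℝ) ^ 3) := by ring
    _ ≤ 1 / 4 * (Real.pi * y) := by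
        gcongr
        exact Real.pi_gt_three.le

namespace cutoff

variable {n : ℕ}

lemma half_sub_inv_nonneg (hn : 2 ≤ n) : 0 ≤ (1 / 2 - 1 / n : ℝ) := by
  have : (2 : ℝ) ≤ n := by exact_mod_cast hn
  exact sub_nonneg.2 (by gcongr)

lemma support_backwardDiff_subset (hn : 2 ≤ n) :
    Function.support (backwardDiff (1 / 2 - 1 / (n : ℝ)) (cutoffStep n)) ⊆ Ioo 0 (1 / 2) := by
  have hH := smoothStep_cutoffStep (n := n) (by lia)
  simpa using hH.support_backwardDiff_subset (half_sub_inv_nonneg hn)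

lemma eq_backwardDiff (hn : 2 ≤ n) {t : ℝ} (ht : t ∈ Icc 0 1) :
    cutoff n t = backwardDiff (1 / 2 - 1 / (n : ℝ)) (cutoffStep n) t :=
  comp_fract_eq_self
    ((support_backwardDiff_subset hn).trans (Ioo_subset_Ioo_right one_half_lt_one.le)) ht

protected lemma contDiff (hn : 2 ≤ n) : ContDiff ℝ (⊤ : ℕ∞) (cutoff n) :=
  contDiff_comp_fract one_half_lt_one
    (contDiff_backwardDiff (smoothStep_cutoffStep (by lia)).contDiff _)
    ((support_backwardDiff_subset hn).trans Ioo_subset_Icc_self)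

lemma periodic (n : ℕ) : Function.Periodic (cutoff n) 1 :=
  (Int.fract_periodic ℝ).comp _

lemma nonneg (hn : 2 ≤ n) (t : ℝ) : 0 ≤ cutoff n t :=
  (smoothStep_cutoffStep (by lia)).backwardDiff_nonneg (half_sub_inv_nonneg hn) _

lemma le_one (hn : n ≠ 0) (t : ℝ) : cutoff n t ≤ 1 :=
  (smoothStep_cutoffStep hn).backwardDiff_le_one _ _

lemma eq_one (hn : 2 ≤ n) {t : ℝ} (ht : t ∈ Icc (1 / (n : ℝ)) (1 / 2 - 1 / n)) :
    cutoff n t = 1 := by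
  have hinv : (0 : ℝ) ≤ 1 / n := by positivity
  rw [eq_backwardDiff hn ⟨hinv.trans ht.1, by linarith [ht.2]⟩]
  exact (smoothStep_cutoffStep (by lia)).backwardDiff_eq_one ht

lemma eq_zero (hn : 2 ≤ n) {t : ℝ} (ht : t ∈ Icc (1 / 2) 1) : cutoff n t = 0 := by
  rw [eq_backwardDiff hn ⟨one_half_pos.le.trans ht.1, ht.2⟩]
  exact Function.notMem_support.1 fun h => ht.1.not_gt (support_backwardDiff_subset hn h).2

lemma norm_fourierCoeff01_le_one (hn : 2 ≤ n) (b : ℤ) :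
    ‖fourierCoeff01 (fun t => (cutoff n t : ℂ)) b‖ ≤ 1 :=
  norm_fourierCoeff01_le (fun t _ => by
    rw [Complex.norm_real, Real.norm_of_nonneg (nonneg hn t)]
    exact le_one (by lia) t) b

lemma norm_fourierCoeff01_le_div (hn : 2 ≤ n) {b : ℤ} (hb : b ≠ 0) :
    ‖fourierCoeff01 (fun t => (cutoff n t : ℂ)) b‖ ≤
      ‖𝓕 (fun t => ((deriv (cutoffStep n) t : ℝ) : ℂ)) (b : ℝ)‖ / (Real.pi * |(b : ℝ)|) := by
  rw [le_div_iff₀' (by positivity)]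
  have hH := smoothStep_cutoffStep (n := n) (by lia)
  exact hH.pi_mul_abs_mul_norm_fourierCoeff01_le (half_sub_inv_nonneg hn) (by norm_num) b

lemma norm_fourierCoeff01_le_inv_abs (hn : 2 ≤ n) {b : ℤ} (hb : b ≠ 0) :
    ‖fourierCoeff01 (fun t => (cutoff n t : ℂ)) b‖ ≤ |(b : ℝ)|⁻¹ := by
  calc ‖fourierCoeff01 (fun t => (cutoff n t : ℂ)) b‖
      ≤ ‖𝓕 (fun t => ((deriv (cutoffStep n) t : ℝ) : ℂ)) (b : ℝ)‖ / (Real.pi * |(b : ℝ)|) :=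
        norm_fourierCoeff01_le_div hn hb
    _ ≤ 1 / (1 * |(b : ℝ)|) := by
        gcongr
        · exact (smoothStep_cutoffStep (by lia)).norm_fourier_deriv_le_one _
        · linarith [Real.pi_gt_three]
    _ = |(b : ℝ)|⁻¹ := by rw [one_mul, one_div]

lemma norm_fourierCoeff01_le_inv_sq (hn : 3 ≤ n) {b : ℤ} (hb : (n : ℤ) ^ 3 < |b|) :
    ‖fourierCoeff01 (fun t => (cutoff n t : ℂ)) b‖ ≤ n ^ 2 * (1 / 4) ^ n * ((b : ℝ) ^ 2)⁻¹ := by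
  have hb0 : b ≠ 0 := by
    rintro rfl
    exact absurd hb (not_lt.2 (by positivity))
  have hy : 0 < Real.pi * |(b : ℝ)| := by positivity
  have hratio : 2 * (n : ℝ) ^ 2 / (Real.pi * |(b : ℝ)|) ≤ 1 / 4 :=
    two_mul_sq_div_pi_mul_le hn (by exact_mod_cast hb.le)
  obtain ⟨k, rfl⟩ : ∃ k, n = k + 1 := ⟨n - 1, by lia⟩
  calc ‖fourierCoeff01 (fun t => (cutoff (k + 1) t : ℂ)) b‖
      ≤ (2 * ((k + 1 : ℕ) : ℝ) ^ 2 / (Real.pi * |(b : ℝ)|)) ^ (k + 1) / (Real.pi * |(b : ℝ)|) := by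
        refine (norm_fourierCoeff01_le_div (by lia) hb0).trans ?_
        gcongr
        exact norm_fourier_deriv_cutoffStep_le k.succ_ne_zero (by exact_mod_cast hb0)
    _ ≤ (1 / 4) ^ k * (2 * ((k + 1 : ℕ) : ℝ) ^ 2) / (Real.pi * |(b : ℝ)|) ^ 2 :=
        pow_succ_div_le_of_div_le (by positivity) hy hratio k
    _ ≤ (1 / 4) ^ k * (2 * ((k + 1 : ℕ) : ℝ) ^ 2) / (8 * (b : ℝ) ^ 2) := by
        rw [mul_pow, sq_abs]
        gcongr
        nlinarith [Real.pi_gt_three]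
    _ = ((k + 1 : ℕ) : ℝ) ^ 2 * (1 / 4) ^ (k + 1) * ((b : ℝ) ^ 2)⁻¹ := by
        field_simp
        ring

lemma sum_norm_fourierCoeff01_tail_le (hn : 3 ≤ n) (s : Finset ℤ) :
    ∑ b ∈ s, (if (n : ℤ) ^ 3 < |b| then ‖fourierCoeff01 (fun t => (cutoff n t : ℂ)) b‖ else 0) ≤
      ((2 : ℝ) ^ n)⁻¹ := by
  have hn' : (3 : ℝ) ≤ n := by exact_mod_cast hn
  have htail := sum_ite_lt_abs_le (N := n ^ 3) (D := n ^ 2 * (1 / 4) ^ n)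
    (f := fun b => ‖fourierCoeff01 (fun t => (cutoff n t : ℂ)) b‖) (by positivity) (by positivity)
    (fun b hb => norm_fourierCoeff01_le_inv_sq hn (by exact_mod_cast hb)) s
  push_cast at htail
  calc _ ≤ 2 * ((n : ℝ) ^ 2 * (1 / 4) ^ n) / n ^ 3 := htail
    _ = 2 / n * (1 / 4 : ℝ) ^ n := by field_simp
    _ ≤ 1 * (1 / 2) ^ n := by
        gcongr
        · exact (div_le_one (by positivity)).2 (by linarith)
        · norm_num
    _ = ((2 : ℝ) ^ n)⁻¹ := by rw [one_mul, one_div, inv_pow]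

lemma summable_norm_fourierCoeff01_tail (hn : 3 ≤ n) :
    Summable fun b : ℤ =>
      if (n : ℤ) ^ 3 < |b| then ‖fourierCoeff01 (fun t => (cutoff n t : ℂ)) b‖ else 0 :=
  summable_of_sum_le (fun b => by positivity) (sum_norm_fourierCoeff01_tail_le hn)

lemma tsum_norm_fourierCoeff01_tail_le (hn : 3 ≤ n) :
    (∑' b : ℤ, if (n : ℤ) ^ 3 < |b| then ‖fourierCoeff01 (fun t => (cutoff n t : ℂ)) b‖ else 0) ≤
      ((2 : ℝ) ^ n)⁻¹ :=
  (summable_norm_fourierCoeff01_tail hn).tsum_le_of_sum_le (sum_norm_fourierCoeff01_tail_le hn)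

lemma tsum_norm_fourierCoeff01_le (hn : 3 ≤ n) :
    ∑' b : ℤ, ‖fourierCoeff01 (fun t => (cutoff n t : ℂ)) b‖ ≤ 10 * Real.log n := by
  have hlog : 1 ≤ Real.log n := by
    have : (3 : ℝ) ≤ n := by exact_mod_cast hn
    rw [Real.le_log_iff_exp_le (by positivity)]
    linarith [Real.exp_one_lt_three]
  have hpow : ((2 : ℝ) ^ n)⁻¹ ≤ 1 := inv_le_one_of_one_le₀ (one_le_pow₀ one_le_two)
  have hsum := tsum_le_zero_add_log_add_tail (N := n ^ 3)
    (f := fun b => ‖fourierCoeff01 (fun t => (cutoff n t : ℂ)) b‖)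
    (fun b hb => norm_fourierCoeff01_le_inv_abs (by lia) hb)
    (by exact_mod_cast summable_norm_fourierCoeff01_tail hn)
  push_cast [Real.log_pow] at hsum
  linarith [norm_fourierCoeff01_le_one (by lia : 2 ≤ n) 0, tsum_norm_fourierCoeff01_tail_le hn]

end cutoff

/-- Existence of the smooth cutoff `h₀`: a smooth 1-periodic function, `0 ≤ h ≤ 1`,
equal to `1` on `[1/n, 1/2 - 1/n]`, vanishing on `[1/2, 1]`, with `∑_b |ĥ(b)| ≤ C log n`
and Fourier tail beyond frequency `n ^ 3` at most `2 ^ (-n)`. -/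
theorem exists_smooth_cutoff :
    ∃ C : ℝ, ∀ n : ℕ, 3 ≤ n → ∃ h : ℝ → ℝ,
      ContDiff ℝ (⊤ : ℕ∞) h ∧
      Function.Periodic h 1 ∧
      (∀ t, 0 ≤ h t ∧ h t ≤ 1) ∧
      (∀ t ∈ Set.Icc (1 / (n : ℝ)) (1 / 2 - 1 / (n : ℝ)), h t = 1) ∧
      (∀ t ∈ Set.Icc (1 / 2 : ℝ) 1, h t = 0) ∧
      (∑' b : ℤ, ‖fourierCoeff01 (fun t => (h t : ℂ)) b‖) ≤ C * Real.log n ∧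
      (∑' b : ℤ, if ((n : ℤ)) ^ 3 < |b| then
          ‖fourierCoeff01 (fun t => (h t : ℂ)) b‖ else 0)
        ≤ ((2 : ℝ) ^ n)⁻¹ := by
  refine ⟨10, fun n hn => ⟨cutoff n, ?_⟩⟩
  have hn2 : 2 ≤ n := by lia
  exact ⟨cutoff.contDiff hn2, cutoff.periodic n,
    fun t => ⟨cutoff.nonneg hn2 t, cutoff.le_one (by lia) t⟩,
    fun t => cutoff.eq_one hn2, fun t => cutoff.eq_zero hn2,
    cutoff.tsum_norm_fourierCoeff01_le hn, cutoff.tsum_norm_fourierCoeff01_tail_le hn⟩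
end

section
/- There is an absolute constant C such that the following holds. Let n ≥ 2 be an integer, N = 2^n, A ⊆ {1,…,n−1}, M ≥ 1 a real number, and for each j ∈ A let h_j : ℝ → ℂ be a 1-periodic trigonometric polynomial with ∑_{b∈ℤ} |ĥ_j(b)| ≤ M, where ĥ_j(b) = ∫₀¹ h_j(t) e^{−2πibt} dt. Define f(k) = ∏_{j∈A} h_j(k/2^{j+1}) for integers k. Then ∫₀¹ |∑_{0 ≤ k < N} f(k) e(kα)| dα ≤ C M^{|A|} log N. -/
/-- `h` is a (1-periodic) trigonometric polynomial of degree at most `d`. -/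
def IsTrigPolyDeg (h : ℝ → ℂ) (d : ℕ) : Prop :=
  ∃ a : ℤ → ℂ, (∀ b : ℤ, (d : ℤ) < |b| → a b = 0) ∧
    ∀ t : ℝ, h t = ∑ b ∈ Finset.Icc (-(d : ℤ)) (d : ℤ),
      a b * Complex.exp (2 * Real.pi * Complex.I * b * t)

/-!
Expanding each `h_j` into its Fourier series writes `f` as a superposition of the characters
`k ↦ e(kx)`, with total mass at most `∏_j ∑_b |ĥ_j(b)|`. Multiplying a weight by such a character
translates its exponential sum by `x`, which leaves the `L¹` norm over the circle unchanged, so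
every `h_j` costs at most a factor `∑_b |ĥ_j(b)|`. What remains is the Dirichlet kernel
`∑_{k < N} e(kα)`, which is at most `min (N, 1 / (2|α|))` for `|α| ≤ 1/2` and hence has `L¹` norm
`O(log N)`.
-/

open MeasureTheory Finset

lemma seminorm_le_tsum_of_hasSum {𝕜 E ι : Type*} [SeminormedRing 𝕜] [AddCommGroup E] [Module 𝕜 E]
    [TopologicalSpace E] {p : Seminorm 𝕜 E} (hp : Continuous p) {v : ι → E} {w : E}
    (hw : HasSum v w) (hv : Summable fun i => p (v i)) : p w ≤ ∑' i, p (v i) :=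
  le_of_tendsto ((hp.tendsto w).comp hw) <| .of_forall fun s =>
    (le_sum_of_subadditive p (map_zero p).le (map_add_le_add p) s v).trans
      (hv.sum_le_tsum s fun i _ => apply_nonneg p (v i))

lemma fourier_apply_add {T : ℝ} (m : ℤ) (x y : AddCircle T) :
    fourier m (x + y) = fourier m x * fourier m y := by
  simp only [fourier_apply, smul_add, AddCircle.toCircle_add, Circle.coe_mul]

lemma fourier_zsmul_comm {T : ℝ} (m n : ℤ) (x : AddCircle T) :
    fourier m (n • x) = fourier n (m • x) := by
  simp only [fourier_apply, smul_comm m n x]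

lemma fourier_apply_coe_real (m : ℤ) (t : ℝ) :
    fourier m (t : UnitAddCircle) = Complex.exp (2 * Real.pi * Complex.I * m * t) := by
  rw [fourier_coe_apply, Complex.ofReal_one, div_one]

lemma integrable_of_continuous_of_compactSpace {X E : Type*} [TopologicalSpace X] [CompactSpace X]
    [MeasurableSpace X] [OpensMeasurableSpace X] [NormedAddCommGroup E] {μ : Measure X}
    [IsFiniteMeasureOnCompacts μ] {f : X → E} (hf : Continuous f) : Integrable f μ :=
  hf.integrable_of_hasCompactSupport (.of_compactSpace f)

/-- The exponential sum `α ↦ ∑_{0 ≤ k < N} w(k) e(kα)`, viewed as a continuous function on the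
circle `ℝ/ℤ`. -/
noncomputable def expSum (N : ℕ) (w : ℕ → ℂ) : C(UnitAddCircle, ℂ) :=
  ∑ k ∈ range N, w k • fourier k

lemma expSum_apply (N : ℕ) (w : ℕ → ℂ) (α : UnitAddCircle) :
    expSum N w α = ∑ k ∈ range N, w k * fourier k α := by
  simp only [expSum, ContinuousMap.sum_apply, ContinuousMap.smul_apply, smul_eq_mul]

lemma expSum_add (N : ℕ) (v w : ℕ → ℂ) : expSum N (v + w) = expSum N v + expSum N w := by
  simp only [expSum, Pi.add_apply, add_smul _ _ (fourier _), sum_add_distrib]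

lemma expSum_smul (N : ℕ) (c : ℂ) (w : ℕ → ℂ) : expSum N (c • w) = c • expSum N w := by
  simp only [expSum, Pi.smul_apply, smul_assoc, smul_sum]

lemma expSum_fourier_mul (N : ℕ) (w : ℕ → ℂ) (x α : UnitAddCircle) :
    expSum N (fun k => fourier k x * w k) α = expSum N w (α + x) := by
  simp only [expSum_apply, fourier_apply_add]
  exact sum_congr rfl fun k _ => by ring

/-- The `L¹` norm over the circle of the exponential sum with weights `w`, as a seminorm in `w`. -/
noncomputable def expSumL1 (N : ℕ) : Seminorm ℂ (ℕ → ℂ) :=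
  Seminorm.of (fun w => ∫ α, ‖expSum N w α‖)
    (fun v w => by
      have integrable_norm (u : ℕ → ℂ) : Integrable fun α => ‖expSum N u α‖ :=
        integrable_of_continuous_of_compactSpace (expSum N u).continuous.norm
      rw [← integral_add (integrable_norm v) (integrable_norm w), expSum_add]
      exact integral_mono (expSum_add N v w ▸ integrable_norm (v + w))
        ((integrable_norm v).add (integrable_norm w)) fun α => norm_add_le _ _)
    (fun c w => by
      simp only [expSum_smul, ContinuousMap.smul_apply, norm_smul, integral_const_mul])

lemma expSumL1_apply (N : ℕ) (w : ℕ → ℂ) : expSumL1 N w = ∫ α, ‖expSum N w α‖ := rfl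

lemma expSumL1_eq_intervalIntegral (N : ℕ) (w : ℕ → ℂ) (a : ℝ) :
    expSumL1 N w = ∫ α in a..a + 1, ‖expSum N w α‖ :=
  (UnitAddCircle.intervalIntegral_preimage a fun α => ‖expSum N w α‖).symm

lemma expSumL1_eq_integral_exp (N : ℕ) (w : ℕ → ℂ) :
    expSumL1 N w = ∫ α in (0 : ℝ)..1,
      ‖∑ k ∈ range N, w k * Complex.exp (2 * Real.pi * Complex.I * k * α)‖ := by
  simp only [expSumL1_eq_intervalIntegral N w 0, zero_add, expSum_apply, fourier_apply_coe_real,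
    Int.cast_natCast]

lemma continuous_expSumL1 (N : ℕ) : Continuous (expSumL1 N) := by
  simp only [funext (expSumL1_eq_integral_exp N)]
  exact intervalIntegral.continuous_parametric_intervalIntegral_of_continuous'
    (by unfold Function.uncurry; fun_prop) 0 1

lemma expSumL1_fourier_mul (N : ℕ) (w : ℕ → ℂ) (x : UnitAddCircle) :
    expSumL1 N (fun k => fourier k x * w k) = expSumL1 N w := by
  simp only [expSumL1_apply, expSum_fourier_mul]
  exact integral_add_right_eq_self (fun α => ‖expSum N w α‖) x

lemma expSumL1_continuousMap_mul_le (N : ℕ) {F : C(UnitAddCircle, ℂ)}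
    (hF : Summable (fourierCoeff F)) (θ : UnitAddCircle) (w : ℕ → ℂ) :
    expSumL1 N (fun k => F (k • θ) * w k) ≤ (∑' b, ‖fourierCoeff F b‖) * expSumL1 N w := by
  let term (b : ℤ) : ℕ → ℂ := fourierCoeff F b • fun k : ℕ => fourier k (b • θ) * w k
  have hasSum_term : HasSum term fun k => F (k • θ) * w k := by
    refine Pi.hasSum.mpr fun k => ?_
    refine ((has_pointwise_sum_fourier_series_of_summable hF (k • θ)).mul_right (w k)).congr_fun ?_
    intro b
    simp only [term, Pi.smul_apply, smul_eq_mul, fourier_zsmul_comm k b, natCast_zsmul, mul_assoc]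
  have expSumL1_term (b : ℤ) : expSumL1 N (term b) = ‖fourierCoeff F b‖ * expSumL1 N w := by
    rw [map_smul_eq_mul, expSumL1_fourier_mul]
  calc expSumL1 N (fun k => F (k • θ) * w k)
      ≤ ∑' b, expSumL1 N (term b) := by
        refine seminorm_le_tsum_of_hasSum (continuous_expSumL1 N) hasSum_term ?_
        simpa only [expSumL1_term] using hF.norm.mul_right _
    _ = (∑' b, ‖fourierCoeff F b‖) * expSumL1 N w := by
        simp only [expSumL1_term, tsum_mul_right]

lemma expSumL1_prod_le {ι : Type*} (N : ℕ) (A : Finset ι) {F : ι → C(UnitAddCircle, ℂ)}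
    (hF : ∀ j ∈ A, Summable (fourierCoeff (F j))) (θ : ι → UnitAddCircle) :
    expSumL1 N (fun k => ∏ j ∈ A, F j (k • θ j)) ≤
      (∏ j ∈ A, ∑' b, ‖fourierCoeff (F j) b‖) * expSumL1 N 1 := by
  classical
  induction A using Finset.induction_on with
  | empty => exact (one_mul (expSumL1 N 1)).ge
  | insert i A hi ih =>
    simp only [prod_insert hi, mul_assoc]
    refine (expSumL1_continuousMap_mul_le N (hF i (mem_insert_self i A)) (θ i) _).trans ?_
    gcongr
    exact ih fun j hj => hF j (mem_insert_of_mem hj)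

lemma norm_expSum_one_le (N : ℕ) (α : UnitAddCircle) : ‖expSum N 1 α‖ ≤ N := by
  rw [expSum_apply]
  refine (norm_sum_le _ _).trans_eq ?_
  simp only [Pi.one_apply, one_mul, fourier_apply, Circle.norm_coe, sum_const, card_range,
    nsmul_eq_mul, mul_one]

lemma norm_expSum_one_mul_abs_sin_le (N : ℕ) (α : ℝ) :
    ‖expSum N 1 α‖ * |Real.sin (Real.pi * α)| ≤ 1 := by
  set z : ℂ := fourier 1 (α : UnitAddCircle) with hz
  have norm_z : ‖z‖ = 1 := by rw [hz, fourier_one, Circle.norm_coe]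
  have expSum_eq : expSum N 1 α = ∑ k ∈ range N, z ^ k := by
    simp only [expSum_apply, Pi.one_apply, one_mul, fourier_apply, natCast_zsmul,
      AddCircle.toCircle_nsmul, Circle.coe_pow, hz, one_zsmul]
  have norm_sub_one : ‖z - 1‖ = 2 * |Real.sin (Real.pi * α)| := by
    have hexp : z = Complex.exp (Complex.I * (2 * Real.pi * α : ℝ)) := by
      rw [hz, fourier_apply_coe_real]
      push_cast
      ring_nf
    rw [hexp, Complex.norm_exp_I_mul_ofReal_sub_one, norm_mul, Real.norm_two, Real.norm_eq_abs]
    ring_nf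
  have geom : ‖expSum N 1 α‖ * ‖z - 1‖ ≤ 2 := by
    rw [expSum_eq, ← norm_mul, geom_sum_mul]
    refine (norm_sub_le _ _).trans_eq ?_
    rw [norm_pow, norm_z, one_pow, norm_one, one_add_one_eq_two]
  rw [norm_sub_one] at geom
  linarith

lemma norm_expSum_one_le_div (N : ℕ) {α : ℝ} (hα : |α| ≤ 1 / 2) :
    ‖expSum N 1 α‖ ≤ 2 * N / (1 + 2 * N * |α|) := by
  have jordan : 2 * |α| ≤ |Real.sin (Real.pi * α)| := by
    have habs : |Real.pi * α| = Real.pi * |α| := by rw [abs_mul, abs_of_pos Real.pi_pos]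
    have hsin := Real.mul_abs_le_abs_sin (x := Real.pi * α) (by rw [habs]; nlinarith [Real.pi_pos])
    rwa [habs, ← mul_assoc, div_mul_cancel₀ _ Real.pi_ne_zero] at hsin
  have decay : ‖expSum N 1 α‖ * (2 * |α|) ≤ 1 :=
    (mul_le_mul_of_nonneg_left jordan (norm_nonneg _)).trans (norm_expSum_one_mul_abs_sin_le N α)
  rw [le_div_iff₀ (by positivity)]
  calc ‖expSum N 1 α‖ * (1 + 2 * N * |α|)
      = ‖expSum N 1 α‖ + N * (‖expSum N 1 α‖ * (2 * |α|)) := by ring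
    _ ≤ N + N * 1 := by gcongr; exact norm_expSum_one_le N α
    _ = 2 * N := by ring

lemma integral_div_one_add_mul {b c : ℝ} (h : 0 < 1 + c * b) :
    ∫ x in (0 : ℝ)..b, c / (1 + c * x) = Real.log (1 + c * b) := by
  simp only [div_eq_mul_inv, intervalIntegral.integral_const_mul]
  rw [intervalIntegral.mul_integral_comp_add_mul (f := fun x => x⁻¹), mul_zero, add_zero,
    integral_inv_of_pos one_pos h, div_one]

lemma integral_neg_self_of_even {E : Type*} [NormedAddCommGroup E] [NormedSpace ℝ E] {f : ℝ → E}
    {b : ℝ} (hf : Function.Even f) (hfi : IntervalIntegrable f volume 0 b) :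
    ∫ x in -b..b, f x = (2 : ℝ) • ∫ x in (0 : ℝ)..b, f x := by
  have reflect : ∫ x in -b..0, f x = ∫ x in (0 : ℝ)..b, f x := by
    simpa only [hf _, neg_zero] using (intervalIntegral.integral_comp_neg (a := 0) (b := b) f).symm
  have hfi_neg : IntervalIntegrable f volume (-b) 0 := by
    simpa only [hf _, neg_zero] using
      ((IntervalIntegrable.iff_comp_neg).mp hfi).symm
  rw [← intervalIntegral.integral_add_adjacent_intervals hfi_neg hfi, reflect, two_smul]

lemma expSumL1_one_le (N : ℕ) : expSumL1 N 1 ≤ 2 * Real.log (1 + N) := by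
  have hcont : Continuous fun α : ℝ => 2 * N / (1 + 2 * N * |α|) := by
    refine Continuous.div₀ (by fun_prop) (by fun_prop) fun α => ?_
    positivity
  calc expSumL1 N 1
      = ∫ α in (-(1 / 2) : ℝ)..1 / 2, ‖expSum N 1 α‖ := by
        rw [expSumL1_eq_intervalIntegral N 1 (-(1 / 2))]
        norm_num
    _ ≤ ∫ α in (-(1 / 2) : ℝ)..1 / 2, 2 * N / (1 + 2 * N * |α|) := by
        refine intervalIntegral.integral_mono_on (by norm_num) ?_ (hcont.intervalIntegrable _ _)
          fun α hα => norm_expSum_one_le_div N (abs_le.mpr hα)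
        refine Continuous.intervalIntegrable ?_ _ _
        exact ((expSum N 1).continuous.comp (AddCircle.continuous_mk' 1)).norm
    _ = 2 * ∫ α in (0 : ℝ)..1 / 2, 2 * N / (1 + 2 * N * |α|) :=
        integral_neg_self_of_even (fun α => by rw [abs_neg]) (hcont.intervalIntegrable _ _)
    _ = 2 * ∫ α in (0 : ℝ)..1 / 2, 2 * N / (1 + 2 * N * α) := by
        congr 1
        refine intervalIntegral.integral_congr fun α hα => ?_
        rw [Set.uIcc_of_le (by norm_num)] at hα
        simp only [abs_of_nonneg hα.1]
    _ = 2 * Real.log (1 + N) := by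
        rw [integral_div_one_add_mul (by positivity)]
        ring_nf

lemma expSumL1_one_le_log {N : ℕ} (hN : 2 ≤ N) : expSumL1 N 1 ≤ 4 * Real.log N := by
  have hN' : (2 : ℝ) ≤ N := by exact_mod_cast hN
  calc expSumL1 N 1 ≤ 2 * Real.log (1 + N) := expSumL1_one_le N
    _ ≤ 2 * Real.log ((N : ℝ) ^ 2) := by gcongr; nlinarith
    _ = 4 * Real.log N := by rw [Real.log_pow]; push_cast; ring

lemma fourierCoeff01_comp_coe (F : UnitAddCircle → ℂ) (b : ℤ) :
    fourierCoeff01 (fun t => F t) b = fourierCoeff F b := by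
  simp only [fourierCoeff_eq_intervalIntegral F b 0, fourierCoeff01, fourier_apply_coe_real,
    smul_eq_mul, zero_add, div_one, one_smul, mul_comm (F _), Int.cast_neg, mul_neg, neg_mul]

lemma exists_continuousMap_lift {h : ℝ → ℂ} (hper : Function.Periodic h 1) (hcont : Continuous h) :
    ∃ F : C(UnitAddCircle, ℂ), h = fun t : ℝ => F t :=
  ⟨⟨hper.lift, continuous_coinduced_dom.mpr hcont⟩, rfl⟩

lemma IsTrigPolyDeg.exists_sum_smul_fourier {h : ℝ → ℂ} {d : ℕ} (hh : IsTrigPolyDeg h d) :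
    ∃ (s : Finset ℤ) (a : ℤ → ℂ), h = fun t : ℝ => (∑ b ∈ s, a b • fourier b)
      (t : UnitAddCircle) := by
  obtain ⟨a, -, ha⟩ := hh
  refine ⟨Icc (-d) d, a, funext fun t => ?_⟩
  simp only [ha, ContinuousMap.sum_apply, ContinuousMap.smul_apply, fourier_apply_coe_real,
    smul_eq_mul]

lemma summable_fourierCoeff_sum_smul_fourier {T : ℝ} [Fact (0 < T)] (s : Finset ℤ) (a : ℤ → ℂ) :
    Summable (fourierCoeff ⇑(∑ b ∈ s, a b • fourier b : C(AddCircle T, ℂ))) := by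
  have coeff_eq (n : ℤ) : fourierCoeff ⇑(∑ b ∈ s, a b • fourier b : C(AddCircle T, ℂ)) n =
      ∑ b ∈ s, a b * (Pi.single b 1 : ℤ → ℂ) n := by
    rw [ContinuousMap.coe_sum, fourierCoeff.sum s _ fun b _ =>
      integrable_of_continuous_of_compactSpace (a b • fourier b).continuous, Finset.sum_apply]
    refine sum_congr rfl fun b _ => ?_
    rw [ContinuousMap.coe_smul, fourierCoeff.const_smul, fourierCoeff_fourier, smul_eq_mul]
  rw [funext coeff_eq]
  exact summable_sum fun b _ => (hasSum_pi_single b 1).summable.mul_left (a b)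

lemma IsTrigPolyDeg.continuous {h : ℝ → ℂ} {d : ℕ} (hh : IsTrigPolyDeg h d) : Continuous h := by
  obtain ⟨s, a, rfl⟩ := hh.exists_sum_smul_fourier
  exact (ContinuousMap.continuous _).comp (AddCircle.continuous_mk' 1)

lemma IsTrigPolyDeg.summable_fourierCoeff01 {h : ℝ → ℂ} {d : ℕ} (hh : IsTrigPolyDeg h d) :
    Summable (fourierCoeff01 h) := by
  obtain ⟨s, a, rfl⟩ := hh.exists_sum_smul_fourier
  rw [funext (fourierCoeff01_comp_coe _)]
  exact summable_fourierCoeff_sum_smul_fourier s a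

theorem digitWeight_expSum_L1_bound_general {ι : Type*} {N : ℕ} (hN : 2 ≤ N) (A : Finset ι)
    (θ M : ι → ℝ) (h : ι → ℝ → ℂ)
    (hh : ∀ j ∈ A, Function.Periodic (h j) 1 ∧ Continuous (h j) ∧
      Summable (fourierCoeff01 (h j)) ∧ ∑' b, ‖fourierCoeff01 (h j) b‖ ≤ M j) :
    (∫ α in (0 : ℝ)..1, ‖∑ k ∈ range N, (∏ j ∈ A, h j (k * θ j)) *
        Complex.exp (2 * Real.pi * Complex.I * k * α)‖) ≤ 4 * (∏ j ∈ A, M j) * Real.log N := by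
  choose! F hF using fun j hj => exists_continuousMap_lift (hh j hj).1 (hh j hj).2.1
  have weight_eq : (fun k : ℕ => ∏ j ∈ A, h j (k * θ j)) =
      fun k : ℕ => ∏ j ∈ A, F j (k • (θ j : UnitAddCircle)) := by
    refine funext fun k => prod_congr rfl fun j hj => ?_
    simp only [hF j hj, ← nsmul_eq_mul, AddCircle.coe_nsmul]
  have coeff_eq (j) (hj : j ∈ A) : fourierCoeff01 (h j) = fourierCoeff (F j) := by
    rw [hF j hj]
    exact funext (fourierCoeff01_comp_coe _)
  have mass_le : ∏ j ∈ A, ∑' b, ‖fourierCoeff (F j) b‖ ≤ ∏ j ∈ A, M j :=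
    prod_le_prod (fun j _ => tsum_nonneg fun b => norm_nonneg _)
      fun j hj => coeff_eq j hj ▸ (hh j hj).2.2.2
  have mass_nonneg : 0 ≤ ∏ j ∈ A, M j :=
    (prod_nonneg fun j _ => tsum_nonneg fun b => norm_nonneg _).trans mass_le
  rw [← expSumL1_eq_integral_exp, weight_eq]
  calc expSumL1 N (fun k => ∏ j ∈ A, F j (k • (θ j : UnitAddCircle)))
      ≤ (∏ j ∈ A, ∑' b, ‖fourierCoeff (F j) b‖) * expSumL1 N 1 :=
        expSumL1_prod_le N A (fun j hj => coeff_eq j hj ▸ (hh j hj).2.2.1) _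
    _ ≤ (∏ j ∈ A, M j) * (4 * Real.log N) := by
        gcongr
        exact expSumL1_one_le_log hN
    _ = 4 * (∏ j ∈ A, M j) * Real.log N := by ring

/-- The `L¹`-norm bound `‖S_f‖₁ ≤ C M^{|A|} log N` for the exponential sum of a
digit weight `f(k) = ∏_{j ∈ A} h_j(k / 2^{j+1})` built from 1-periodic trigonometric
polynomials `h_j` with `∑_b |ĥ_j(b)| ≤ M`. -/
theorem digitWeight_expSum_L1_bound :
    ∃ C : ℝ, ∀ n : ℕ, 2 ≤ n → ∀ N : ℕ, N = 2 ^ n →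
      ∀ A : Finset ℕ, A ⊆ Finset.Icc 1 (n - 1) →
      ∀ M : ℝ, 1 ≤ M →
      ∀ h : ℕ → ℝ → ℂ,
      (∀ j ∈ A, Function.Periodic (h j) 1 ∧ (∃ d : ℕ, IsTrigPolyDeg (h j) d) ∧
        (∑' b : ℤ, norm (fourierCoeff01 (h j) b)) ≤ M) →
      (∫ α in (0:ℝ)..1, norm (∑ k ∈ Finset.range N,
          (∏ j ∈ A, h j ((k : ℝ) / 2 ^ (j + 1))) *
            Complex.exp (2 * Real.pi * Complex.I * k * α)))
        ≤ C * M ^ A.card * Real.log N := by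
  refine ⟨4, fun n hn N hN A _ M _ h hh => ?_⟩
  simpa only [div_eq_mul_inv, prod_const] using digitWeight_expSum_L1_bound_general
    (hN ▸ hn.trans n.lt_two_pow_self.le) A _ (fun _ => M) h fun j hj =>
      let ⟨hper, ⟨_, hpoly⟩, hM⟩ := hh j hj
      ⟨hper, hpoly.continuous, hpoly.summable_fourierCoeff01, hM⟩
end

section
/- There exists an integer n₀ such that the following holds for all n ≥ n₀. Let r, r₁, D, ΔJ be positive integers and let B, Q ≥ 2 be real numbers with: r ≤ n/(40 log₂ n), D > 10 log₂ n, ΔJ > 10 log₂(nB), r₁ D < ΔJ/10, and 2^D ≤ Q ≤ B. Let 1 ≤ j₁ < j₂ < ⋯ < j_{r₁} be integers with ΔJ − j_{r₁} > n/(10r), and let β₁,…,β_{r₁} be integers with |β_s| ≤ n³ for all s, such that θ := ∑_{s=1}^{r₁} β_s 2^{−j_s} is not an integer. Then the number of odd integers q with Q < q ≤ 2Q and ‖qθ‖ < n² Q 2^{−ΔJ} is at most 2^{−D/2} Q. -/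
open scoped Classical

/-- The distance `‖x‖` from a real number `x` to the nearest integer. -/
noncomputable def distNearestInt (x : ℝ) : ℝ := |x - round x|

/-!
By pigeonhole the exponents `j s` avoid an open window `(J, J + D)` with `J ≤ r₁ D`. Truncating
the sum there gives `θ = A / 2 ^ J + O(n ^ 3 / 2 ^ (J + D))` with `A` an integer.

Let `q ≠ q'` be two of the counted integers, and let `m`, `m'` be the integers nearest to `q θ`,
`q' θ`. The integer `q m' - q' m` is less than `1` in absolute value, so it vanishes. If moreover
`|q' - q| < 2 ^ D / (4 n ^ 3)`, then the same holds for `(q' - q) A - (m' - m) 2 ^ J`. Together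
these give `q A = m 2 ^ J`, so `q` divides `m` because it is odd. Now `θ` is so close to the integer
`m / q` that, being a multiple of `2 ^ (-j_{r₁})`, it is equal to it, a contradiction. So the
counted `q` are `2 ^ D / (4 n ^ 3)`-separated, and there are at most `4 n ^ 3 Q / 2 ^ D + 1` of
them.
-/

section NearIntegers

lemma int_eq_of_abs_cast_sub_lt_one {a b : ℤ} (h : |(a : ℝ) - b| < 1) : a = b := by
  have hab : |a - b| < 1 := by exact_mod_cast h
  exact sub_eq_zero.mp (Int.abs_lt_one_iff.mp hab)

variable {θ δ : ℝ} {q q' m m' : ℤ}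

lemma cross_mul_eq_of_near_int (hq : |q * θ - m| < δ) (hq' : |q' * θ - m'| < δ)
    (hδ : (|(q : ℝ)| + |(q' : ℝ)|) * δ < 1) : q * m' = q' * m := by
  apply int_eq_of_abs_cast_sub_lt_one
  calc |((q * m' : ℤ) : ℝ) - (q' * m : ℤ)| = |q' * (q * θ - m) - q * (q' * θ - m')| := by
        push_cast; ring_nf
    _ ≤ |(q' : ℝ)| * |q * θ - m| + |(q : ℝ)| * |q' * θ - m'| := by
        simpa only [abs_mul] using abs_sub (q' * (q * θ - m)) (q * (q' * θ - m'))
    _ ≤ |(q' : ℝ)| * δ + |(q : ℝ)| * δ := by gcongr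
    _ = (|(q : ℝ)| + |(q' : ℝ)|) * δ := by ring
    _ < 1 := hδ

variable {A M : ℤ}

lemma sub_mul_eq_sub_mul_of_near_int (hM : 0 < M) (hq : |q * θ - m| < δ)
    (hq' : |q' * θ - m'| < δ) (hδ : 4 * M * δ ≤ 1)
    (hclose : 2 * M * |(q' : ℝ) - q| * |θ - A / M| < 1) : (q' - q) * A = (m' - m) * M := by
  have hM' : (0 : ℝ) < M := by exact_mod_cast hM
  apply int_eq_of_abs_cast_sub_lt_one
  calc |(((q' - q) * A : ℤ) : ℝ) - ((m' - m) * M : ℤ)|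
      = |M * (q' * θ - m') - M * (q * θ - m) - M * (q' - q) * (θ - A / M)| := by
        push_cast; congr 1; field_simp; ring
    _ ≤ |M * (q' * θ - m')| + |M * (q * θ - m)| + |M * (q' - q) * (θ - A / M)| :=
        (abs_sub _ _).trans (by gcongr; exact abs_sub _ _)
    _ = M * |q' * θ - m'| + M * |q * θ - m| + M * |(q' : ℝ) - q| * |θ - A / M| := by
        simp only [abs_mul, abs_of_pos hM']
    _ ≤ M * δ + M * δ + M * |(q' : ℝ) - q| * |θ - A / M| := by gcongr
    _ < 1 := by linarith

lemma exists_eq_mul_of_two_near_int (hM : 0 < M) (hcop : IsCoprime M q) (hne : q ≠ q')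
    (hq : |q * θ - m| < δ) (hq' : |q' * θ - m'| < δ)
    (hδ : (|(q : ℝ)| + |(q' : ℝ)|) * δ < 1) (hδM : 4 * M * δ ≤ 1)
    (hclose : 2 * M * |(q' : ℝ) - q| * |θ - A / M| < 1) : ∃ h : ℤ, m = q * h := by
  have hcross : q * m' = q' * m := cross_mul_eq_of_near_int hq hq' hδ
  have hdiff : (q' - q) * A = (m' - m) * M := sub_mul_eq_sub_mul_of_near_int hM hq hq' hδM hclose
  have hqA : q * A = m * M := by
    apply mul_left_cancel₀ (sub_ne_zero.mpr hne.symm)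
    linear_combination q * hdiff + M * hcross
  exact hcop.symm.dvd_of_dvd_mul_right (Dvd.intro A hqA)

lemma eq_intCast_of_near_int_mul {h C N : ℤ} (hN : 0 < N) (hθ : θ = C / N)
    (hq : |q * θ - (q * h : ℤ)| < δ) (hδ : N * δ ≤ |(q : ℝ)|) : θ = h := by
  have hN' : (0 : ℝ) < N := by exact_mod_cast hN
  have hlt : |(q : ℝ)| * |(C : ℝ) - (h * N : ℤ)| < |(q : ℝ)| * 1 :=
    calc |(q : ℝ)| * |(C : ℝ) - (h * N : ℤ)| = |N * (q * θ - (q * h : ℤ))| := by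
          rw [← abs_mul, hθ]; push_cast; congr 1; field_simp
      _ = N * |q * θ - (q * h : ℤ)| := by rw [abs_mul, abs_of_pos hN']
      _ < N * δ := by gcongr
      _ ≤ |(q : ℝ)| * 1 := by rwa [mul_one]
  have hC : C = h * N := int_eq_of_abs_cast_sub_lt_one (lt_of_mul_lt_mul_left hlt (abs_nonneg _))
  rw [hθ, hC]
  push_cast
  field_simp

theorem one_le_mul_abs_sub_of_two_near_int {C N : ℤ} (hM : 0 < M) (hcop : IsCoprime M q)
    (hne : q ≠ q') (hq : |q * θ - m| < δ) (hq' : |q' * θ - m'| < δ)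
    (hδ : (|(q : ℝ)| + |(q' : ℝ)|) * δ < 1) (hδM : 4 * M * δ ≤ 1)
    (hN : 0 < N) (hθN : θ = C / N) (hδN : N * δ ≤ |(q : ℝ)|) (hθ : ¬ ∃ k : ℤ, θ = k) :
    1 ≤ 2 * M * |(q' : ℝ) - q| * |θ - A / M| := by
  by_contra! hclose
  obtain ⟨h, rfl⟩ := exists_eq_mul_of_two_near_int hM hcop hne hq hq' hδ hδM hclose
  exact hθ ⟨h, eq_intCast_of_near_int_mul hN hθN hq hδN⟩

end NearIntegers

section DyadicSums

lemma exists_le_card_mul_forall_le_or_add_le {ι : Type*} [Fintype ι] (j : ι → ℕ) (D : ℕ) :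
    ∃ J ≤ Fintype.card ι * D, ∀ s, j s ≤ J ∨ J + D ≤ j s := by
  by_contra! hhit
  have hwindow (i : Fin (Fintype.card ι + 1)) : ∃ s, i * D < j s ∧ j s < i * D + D :=
    hhit (i * D) (Nat.mul_le_mul_right D (by lia))
  choose f hf using hwindow
  have hdiv (i) : j (f i) / D = i :=
    Nat.div_eq_of_lt_le (hf i).1.le (by rw [Nat.succ_mul]; exact (hf i).2)
  have hinj : Function.Injective f := fun a b hab => Fin.ext (by rw [← hdiv a, hab, hdiv b])
  simpa using Fintype.card_le_of_injective f hinj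

lemma sum_pow_le_pow_div_one_sub {x : ℝ} (hx0 : 0 ≤ x) (hx1 : x < 1) (T : Finset ℕ) {K : ℕ}
    (hT : ∀ t ∈ T, K ≤ t) : ∑ t ∈ T, x ^ t ≤ x ^ K / (1 - x) := by
  have hsub : T ⊆ Finset.Ico K (T.sup id + 1) := fun t ht =>
    Finset.mem_Ico.mpr ⟨hT t ht, Nat.lt_succ_of_le (Finset.le_sup (f := id) ht)⟩
  exact (Finset.sum_le_sum_of_subset_of_nonneg hsub fun _ _ _ => pow_nonneg hx0 _).trans
    (geom_sum_Ico_le_of_lt_one hx0 hx1)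

variable {ι : Type*} {S : Finset ι} {j : ι → ℕ} {β : ι → ℤ}

lemma exists_sum_div_two_pow_eq {L : ℕ} (hL : ∀ s ∈ S, j s ≤ L) :
    ∃ C : ℤ, ∑ s ∈ S, (β s : ℝ) / 2 ^ j s = C / 2 ^ L := by
  refine ⟨∑ s ∈ S, β s * 2 ^ (L - j s), ?_⟩
  push_cast
  rw [Finset.sum_div]
  refine Finset.sum_congr rfl fun s hs => ?_
  rw [div_eq_div_iff (by positivity) (by positivity), mul_assoc, ← pow_add,
    Nat.sub_add_cancel (hL s hs)]

lemma abs_sum_div_two_pow_le {b : ℝ} (hb : 0 ≤ b) (hβ : ∀ s ∈ S, |(β s : ℝ)| ≤ b)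
    (hj : Set.InjOn j S) {K : ℕ} (hK : ∀ s ∈ S, K ≤ j s) :
    |∑ s ∈ S, (β s : ℝ) / 2 ^ j s| ≤ 2 * b / 2 ^ K :=
  calc |∑ s ∈ S, (β s : ℝ) / 2 ^ j s| ≤ ∑ s ∈ S, |(β s : ℝ) / 2 ^ j s| :=
        Finset.abs_sum_le_sum_abs _ _
    _ ≤ ∑ s ∈ S, b * (1 / 2) ^ j s := by
        refine Finset.sum_le_sum fun s hs => ?_
        rw [abs_div, abs_of_pos (by positivity : (0 : ℝ) < 2 ^ j s), one_div_pow, mul_one_div]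
        gcongr
        exact hβ s hs
    _ = b * ∑ t ∈ S.image j, (1 / 2) ^ t := by rw [Finset.sum_image hj, Finset.mul_sum]
    _ ≤ b * ((1 / 2) ^ K / (1 - 1 / 2)) := by
        gcongr
        exact sum_pow_le_pow_div_one_sub (by norm_num) (by norm_num) _ (by simpa using hK)
    _ = 2 * b / 2 ^ K := by rw [one_div_pow]; ring

theorem exists_dyadic_approx [Fintype ι] {b : ℝ} (hb : 0 ≤ b) (hβ : ∀ s, |(β s : ℝ)| ≤ b)
    (hj : Function.Injective j) (D : ℕ) :
    ∃ J ≤ Fintype.card ι * D, ∃ A : ℤ,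
      |∑ s, (β s : ℝ) / 2 ^ j s - A / 2 ^ J| ≤ 2 * b / 2 ^ (J + D) := by
  obtain ⟨J, hJ, hgap⟩ := exists_le_card_mul_forall_le_or_add_le j D
  obtain ⟨A, hA⟩ := exists_sum_div_two_pow_eq (S := {s | j s ≤ J}) (j := j) (β := β) (L := J)
    (by simp)
  refine ⟨J, hJ, A, ?_⟩
  rw [← hA, ← Finset.sum_filter_add_sum_filter_not Finset.univ (j · ≤ J), add_sub_cancel_left]
  refine abs_sum_div_two_pow_le hb (fun s _ => hβ s) hj.injOn fun s hs => ?_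
  exact (hgap s).resolve_left (Finset.mem_filter.mp hs).2

end DyadicSums

section Counting

lemma card_le_of_pairwise_le_abs_sub {ι : Type*} {S : Finset ι} {x : ι → ℝ} {a b g : ℝ}
    (hg : 0 < g) (hab : a ≤ b) (hx : ∀ i ∈ S, x i ∈ Set.Icc a b)
    (hsep : (S : Set ι).Pairwise fun i k => g ≤ |x i - x k|) : (S.card : ℝ) ≤ (b - a) / g + 1 := by
  let cell (i : ι) : ℤ := ⌊(x i - a) / g⌋
  have hmaps : ∀ i ∈ S, cell i ∈ Finset.Icc 0 ⌊(b - a) / g⌋ := fun i hi => by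
    obtain ⟨hai, hib⟩ := hx i hi
    exact Finset.mem_Icc.mpr
      ⟨Int.floor_nonneg.mpr (div_nonneg (sub_nonneg.mpr hai) hg.le), Int.floor_mono (by gcongr)⟩
  have hinj : Set.InjOn cell S := by
    intro i hi k hk hcell
    by_contra hne
    have hlt : |(x i - a) / g - (x k - a) / g| < 1 := Int.abs_sub_lt_one_of_floor_eq_floor hcell
    rw [← sub_div, sub_sub_sub_cancel_right, abs_div, abs_of_pos hg, div_lt_one hg] at hlt
    exact (hsep hi hk hne).not_gt hlt
  have hfloor : 0 ≤ ⌊(b - a) / g⌋ := Int.floor_nonneg.mpr (div_nonneg (sub_nonneg.mpr hab) hg.le)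
  have hcard : (S.card : ℤ) ≤ ⌊(b - a) / g⌋ + 1 := by
    have := Finset.card_le_card_of_injOn cell hmaps hinj
    rw [Int.card_Icc] at this
    lia
  calc (S.card : ℝ) ≤ ⌊(b - a) / g⌋ + 1 := by exact_mod_cast hcard
    _ ≤ (b - a) / g + 1 := by gcongr; exact Int.floor_le _

variable {ι : Type*} [Fintype ι] {j : ι → ℕ} {β : ι → ℤ} {b θ δ Q : ℝ} {D K : ℕ}

theorem two_pow_div_le_abs_sub_of_odd_near_int (hb : 0 < b) (hβ : ∀ s, |(β s : ℝ)| ≤ b)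
    (hj : Function.Injective j) (hjK : ∀ s, j s ≤ K) (hθsum : θ = ∑ s, (β s : ℝ) / 2 ^ j s)
    (hθ : ¬ ∃ k : ℤ, θ = k) (hδ : 0 ≤ δ) (hδQ : 4 * Q * δ < 1)
    (hδD : 4 * 2 ^ (Fintype.card ι * D) * δ ≤ 1) (hδK : 2 ^ K * δ ≤ Q) {q q' : ℕ} (hne : q ≠ q')
    (hodd : Odd q) (hQq : Q ≤ q) (hqQ : q ≤ 2 * Q) (hqQ' : q' ≤ 2 * Q)
    (hq : distNearestInt (q * θ) < δ) (hq' : distNearestInt (q' * θ) < δ) :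
    2 ^ D / (4 * b) ≤ |(q : ℝ) - q'| := by
  obtain ⟨J, hJ, A, hA⟩ := exists_dyadic_approx hb.le hβ hj D
  obtain ⟨C, hC⟩ := exists_sum_div_two_pow_eq (S := Finset.univ) (β := β) fun s _ => hjK s
  rw [← hθsum] at hA hC
  have hcop : IsCoprime ((2 ^ J : ℕ) : ℤ) (q : ℤ) :=
    Nat.isCoprime_iff_coprime.mpr ((Nat.coprime_two_left.mpr hodd).pow_left J)
  have hsum : (|((q : ℤ) : ℝ)| + |((q' : ℤ) : ℝ)|) * δ < 1 := by
    simp only [Int.cast_natCast, Nat.abs_cast]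
    exact lt_of_le_of_lt (by gcongr; linarith) hδQ
  have hδJ : 4 * 2 ^ J * δ ≤ 1 := le_trans (by gcongr; norm_num) hδD
  have hfar : 1 ≤ 2 * 2 ^ J * |(q' : ℝ) - q| * |θ - A / 2 ^ J| := by
    simpa using one_le_mul_abs_sub_of_two_near_int (M := (2 ^ J : ℕ)) (N := (2 ^ K : ℕ)) (A := A)
      (by positivity) hcop (by exact_mod_cast hne) hq hq' hsum (by simpa using hδJ)
      (by positivity) (by simpa using hC) (by simpa using hδK.trans hQq) hθ
  rw [div_le_iff₀ (by positivity), abs_sub_comm]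
  calc (2 : ℝ) ^ D = 2 ^ D * 1 := (mul_one _).symm
    _ ≤ 2 ^ D * (2 * 2 ^ J * |(q' : ℝ) - q| * (2 * b / 2 ^ (J + D))) := by
        gcongr
        exact hfar.trans (by gcongr)
    _ = |(q' : ℝ) - q| * (4 * b) := by rw [pow_add]; field_simp; ring

theorem card_odd_near_int_le (hb : 0 < b) (hβ : ∀ s, |(β s : ℝ)| ≤ b)
    (hj : Function.Injective j) (hjK : ∀ s, j s ≤ K) (hθsum : θ = ∑ s, (β s : ℝ) / 2 ^ j s)
    (hθ : ¬ ∃ k : ℤ, θ = k) (hQ : 0 ≤ Q) (hδ : 0 ≤ δ) (hδQ : 4 * Q * δ < 1)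
    (hδD : 4 * 2 ^ (Fintype.card ι * D) * δ ≤ 1) (hδK : 2 ^ K * δ ≤ Q) {S : Finset ℕ}
    (hS : ∀ q ∈ S, Odd q ∧ Q < q ∧ q ≤ 2 * Q ∧ distNearestInt (q * θ) < δ) :
    (S.card : ℝ) ≤ 4 * b * Q / 2 ^ D + 1 := by
  have hsep : (S : Set ℕ).Pairwise fun q q' => 2 ^ D / (4 * b) ≤ |(q : ℝ) - q'| := by
    intro q hqS q' hqS' hne
    obtain ⟨hodd, hQq, hqQ, hq⟩ := hS q hqS
    obtain ⟨-, -, hqQ', hq'⟩ := hS q' hqS'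
    exact two_pow_div_le_abs_sub_of_odd_near_int hb hβ hj hjK hθsum hθ hδ hδQ hδD hδK hne hodd
      hQq.le hqQ hqQ' hq hq'
  calc (S.card : ℝ) ≤ (2 * Q - Q) / (2 ^ D / (4 * b)) + 1 :=
        card_le_of_pairwise_le_abs_sub (by positivity) (by linarith)
          (fun q hq => ⟨(hS q hq).2.1.le, (hS q hq).2.2.1⟩) hsep
    _ = 4 * b * Q / 2 ^ D + 1 := by field_simp; ring

end Counting

section Parameters

lemma pow_le_two_pow_of_mul_logb_le {x : ℝ} (hx : 0 < x) {k m : ℕ}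
    (h : k * Real.logb 2 x ≤ m) : x ^ k ≤ 2 ^ m := by
  rwa [← Real.rpow_natCast 2 m, ← Real.logb_le_iff_le_rpow one_lt_two (by positivity),
    Real.logb_pow]

lemma two_pow_mul_pow_le_two_pow {n r : ℝ} (hn : 1 < n) (hr : 0 < r) {K m : ℕ}
    (hrn : r ≤ n / (40 * Real.logb 2 n)) (hK : n / (10 * r) < (m : ℝ) - K) :
    2 ^ K * n ^ 4 ≤ 2 ^ m := by
  have hlog : 0 < Real.logb 2 n := Real.logb_pos one_lt_two hn
  have hlog4 : 4 * Real.logb 2 n ≤ n / (10 * r) := by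
    rw [le_div_iff₀ (by positivity)] at hrn ⊢
    linarith
  have hKm : K ≤ m := by
    have : (K : ℝ) ≤ m := by linarith
    exact_mod_cast this
  have hn4 : n ^ 4 ≤ 2 ^ (m - K) :=
    pow_le_two_pow_of_mul_logb_le (by linarith) (by push_cast [Nat.cast_sub hKm]; linarith)
  calc 2 ^ K * n ^ 4 ≤ 2 ^ K * 2 ^ (m - K) := by gcongr
    _ = 2 ^ m := by rw [← pow_add, Nat.add_sub_cancel' hKm]

lemma two_pow_mul_sq_le_two_pow {k D m : ℕ} (h : ((k * D : ℕ) : ℝ) < m / 10) :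
    ((2 : ℝ) ^ (k * D)) ^ 2 ≤ 2 ^ m := by
  rw [← pow_mul]
  refine pow_le_pow_right₀ one_le_two ?_
  have : ((k * D * 2 : ℕ) : ℝ) ≤ m := by
    rw [Nat.cast_mul _ 2, Nat.cast_two]
    linarith [(k * D).cast_nonneg (α := ℝ)]
  exact_mod_cast this

variable {n Q : ℝ}

lemma four_mul_mul_div_lt_one_of_sq_le {x H : ℝ} (hn : 2 ≤ n) (hQ : 2 ≤ Q) (hx : x ^ 2 ≤ H)
    (hH : (n * Q) ^ 10 ≤ H) : 4 * x * (n ^ 2 * Q / H) < 1 := by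
  have hnQ : 4 ≤ n * Q := by nlinarith
  have hH0 : 0 < H := lt_of_lt_of_le (by positivity) hH
  have hsq_lt : (4 * (n ^ 2 * Q)) ^ 2 < H :=
    calc (4 * (n ^ 2 * Q)) ^ 2 ≤ ((n * Q) * (n * Q) ^ 2) ^ 2 := by
          rw [mul_pow n Q 2]
          gcongr
          nlinarith
      _ = (n * Q) ^ 6 := by ring
      _ < (n * Q) ^ 10 := pow_lt_pow_right₀ (by linarith) (by norm_num)
      _ ≤ H := hH
  rw [← mul_div_assoc, div_lt_one hH0]
  refine lt_of_pow_lt_pow_left₀ 2 hH0.le ?_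
  calc (4 * x * (n ^ 2 * Q)) ^ 2 = x ^ 2 * (4 * (n ^ 2 * Q)) ^ 2 := by ring
    _ ≤ H * (4 * (n ^ 2 * Q)) ^ 2 := by gcongr
    _ < H * H := by gcongr
    _ = H ^ 2 := (sq H).symm

lemma mul_sq_mul_div_le_of_mul_pow_le {N H : ℝ} (hN : 0 < N) (hn : 1 ≤ n) (hQ : 0 ≤ Q)
    (hH : N * n ^ 4 ≤ H) : N * (n ^ 2 * Q / H) ≤ Q := by
  have hH0 : 0 < H := lt_of_lt_of_le (by positivity) hH
  rw [← mul_div_assoc, div_le_iff₀ hH0]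
  calc N * (n ^ 2 * Q) ≤ N * (n ^ 4 * Q) := by
        gcongr
        norm_num
    _ = Q * (N * n ^ 4) := by ring
    _ ≤ Q * H := by gcongr

lemma four_mul_mul_div_two_pow_add_one_le {D : ℕ} (hn : 3 ≤ n) (hnD : n ^ 10 ≤ 2 ^ D)
    (hDQ : 2 ^ D ≤ Q) : 4 * n ^ 3 * Q / 2 ^ D + 1 ≤ 2 ^ (-(D : ℝ) / 2) * Q := by
  set R : ℝ := 2 ^ ((D : ℝ) / 2) with hR
  have hR0 : 0 < R := by positivity
  have hRsq : (2 : ℝ) ^ D = R ^ 2 := by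
    rw [hR, ← Real.rpow_mul_natCast zero_le_two, Nat.cast_two, div_mul_cancel₀ _ two_ne_zero,
      Real.rpow_natCast]
  rw [hRsq] at hnD hDQ ⊢
  have hnR : n ^ 5 ≤ R := by
    refine le_of_sq_le_sq ?_ hR0.le
    rwa [← pow_mul]
  have h8R : 8 * n ^ 3 ≤ R :=
    calc 8 * n ^ 3 ≤ n ^ 2 * n ^ 3 := by
          gcongr
          nlinarith
      _ = n ^ 5 := by ring
      _ ≤ R := hnR
  have hR2 : 2 ≤ R := by
    have : 1 ≤ n ^ 3 := one_le_pow₀ (by linarith)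
    linarith
  have hQ : 0 ≤ Q := (sq_nonneg R).trans hDQ
  rw [neg_div, Real.rpow_neg zero_le_two, ← hR]
  have hmain : 4 * n ^ 3 * Q / R ^ 2 ≤ R⁻¹ * Q / 2 := by
    rw [div_le_iff₀ (by positivity)]
    calc 4 * n ^ 3 * Q = 8 * n ^ 3 * Q / 2 := by ring
      _ ≤ R * Q / 2 := by gcongr
      _ = R⁻¹ * Q / 2 * R ^ 2 := by field_simp
  have hone : 1 ≤ R⁻¹ * Q / 2 :=
    calc 1 ≤ R / 2 := by linarith
      _ = R⁻¹ * R ^ 2 / 2 := by field_simp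
      _ ≤ R⁻¹ * Q / 2 := by gcongr
  linarith

end Parameters

/-- Counting odd `q ∈ (Q, 2Q]` with `‖qθ‖ < n² Q 2^{-ΔJ}` for
`θ = ∑_s β_s 2^{-j_s}` not an integer: there are at most `2^{-D/2} Q` of them. -/
theorem count_odd_q_near_int :
    ∃ n₀ : ℕ, ∀ n : ℕ, n₀ ≤ n →
      ∀ r r₁ D ΔJ : ℕ, 0 < r → ∀ hr₁ : 0 < r₁, 0 < D → 0 < ΔJ →
      ∀ B Q : ℝ, 2 ≤ B → 2 ≤ Q →
      (r : ℝ) ≤ (n : ℝ) / (40 * Real.logb 2 n) →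
      (D : ℝ) > 10 * Real.logb 2 n →
      (ΔJ : ℝ) > 10 * Real.logb 2 ((n : ℝ) * B) →
      ((r₁ * D : ℕ) : ℝ) < (ΔJ : ℝ) / 10 →
      (2 : ℝ) ^ D ≤ Q → Q ≤ B →
      ∀ j : Fin r₁ → ℕ, 1 ≤ j ⟨0, hr₁⟩ → StrictMono j →
      ((ΔJ : ℝ) - (j ⟨r₁ - 1, by omega⟩ : ℝ)) > (n : ℝ) / (10 * r) →
      ∀ β : Fin r₁ → ℤ, (∀ s, |β s| ≤ (n : ℤ) ^ 3) →
      ∀ θ : ℝ, θ = ∑ s : Fin r₁, (β s : ℝ) / 2 ^ (j s) →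
      (¬ ∃ m : ℤ, θ = (m : ℝ)) →
      (((Finset.range (⌊2 * Q⌋₊ + 1)).filter (fun q : ℕ => Odd q ∧ Q < (q : ℝ) ∧
          (q : ℝ) ≤ 2 * Q ∧
          distNearestInt ((q : ℝ) * θ) < (n : ℝ) ^ 2 * Q / 2 ^ ΔJ)).card : ℝ)
        ≤ (2 : ℝ) ^ (-(D : ℝ) / 2) * Q := by
  refine ⟨3, ?_⟩
  intro n hn r r₁ D ΔJ hr hr₁ _ _ B Q _ hQ hrn hDn hΔB hrD hDQ hQB j _ hj hjl β hβ θ hθsum hθ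
  have hn3 : (3 : ℝ) ≤ n := by exact_mod_cast hn
  have hnD : (n : ℝ) ^ 10 ≤ 2 ^ D := pow_le_two_pow_of_mul_logb_le (by linarith) hDn.le
  have hnQ : (n * Q) ^ 10 ≤ 2 ^ ΔJ :=
    (by gcongr : (n * Q) ^ 10 ≤ (n * B) ^ 10).trans
      (pow_le_two_pow_of_mul_logb_le (by positivity) hΔB.le)
  have hQsq : Q ^ 2 ≤ 2 ^ ΔJ :=
    calc Q ^ 2 ≤ (n * Q) ^ 2 := by gcongr; nlinarith
      _ ≤ (n * Q) ^ 10 := pow_le_pow_right₀ (by nlinarith) (by norm_num)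
      _ ≤ 2 ^ ΔJ := hnQ
  have hδQ := four_mul_mul_div_lt_one_of_sq_le (by linarith) hQ hQsq hnQ
  have hδD := four_mul_mul_div_lt_one_of_sq_le (by linarith) hQ (two_pow_mul_sq_le_two_pow hrD) hnQ
  have hδK := mul_sq_mul_div_le_of_mul_pow_le (Q := Q) (by positivity) (by linarith) (by linarith)
    (two_pow_mul_pow_le_two_pow (by linarith) (by exact_mod_cast hr) hrn hjl)
  have hjK (s : Fin r₁) : j s ≤ j ⟨r₁ - 1, by omega⟩ := hj.monotone (Fin.mk_le_mk.mpr (by lia))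
  refine (card_odd_near_int_le (D := D) (b := n ^ 3) (by positivity)
    (fun s => by exact_mod_cast hβ s) hj.injective hjK hθsum hθ (by linarith) (by positivity)
    hδQ (by simpa using hδD.le) hδK fun q hq => (Finset.mem_filter.mp hq).2).trans ?_
  exact four_mul_mul_div_two_pow_add_one_le hn3 hnD hDQ
end

section
/- There is an absolute constant C such that for every integer q ≥ 2, every primitive Dirichlet character χ modulo q, every positive integer q₀ with gcd(q₀, q) = 1, all integers a and c, every real number ξ, and every integer M ≥ 1, one has |∑_{0 ≤ v < M, v ≡ a (mod q₀)} e(ξ v) χ(v + c)| ≤ C (1 + M/(q₀ q)) √q · log q. -/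
/-!
Expand `χ` in additive characters modulo `q`. Its Fourier coefficients have absolute value at most
`√q`, by the evaluation of the Gauss sum of a primitive character, so it remains to bound the sum
over frequencies `k` modulo `q` of the absolute values of the geometric sums with ratio
`e(ξ q₀ + k q₀ / q)`. As `q₀` is invertible modulo `q`, these ratios are `q` equally spaced points
of the unit circle. The point closest to `1` contributes at most the number of terms, and the
others contribute a harmonic sum `≪ q log q`.
-/

open Finset
open scoped FourierTransform

section GeometricSums

lemma norm_geom_sum_le_two_div_norm_sub_one {𝕜 : Type*} [NormedDivisionRing 𝕜] {z : 𝕜}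
    (hz : ‖z‖ ≤ 1) (hz1 : z ≠ 1) (n : ℕ) : ‖∑ i ∈ range n, z ^ i‖ ≤ 2 / ‖z - 1‖ := by
  have hnum : ‖z ^ n - 1‖ ≤ 2 := calc
    ‖z ^ n - 1‖ ≤ ‖z ^ n‖ + ‖(1 : 𝕜)‖ := norm_sub_le _ _
    _ ≤ 1 + 1 := by
      gcongr
      · exact norm_pow z n ▸ pow_le_one₀ (norm_nonneg z) hz
      · exact norm_one.le
    _ = 2 := one_add_one_eq_two
  rw [geom_sum_eq hz1, norm_div]
  gcongr

lemma norm_fourierChar_sub_one (x : ℝ) :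
    ‖(𝐞 x : ℂ) - 1‖ = 2 * |Real.sin (Real.pi * x)| := by
  rw [Real.fourierChar_apply, mul_comm, Complex.norm_exp_I_mul_ofReal_sub_one, norm_mul,
    Real.norm_two, Real.norm_eq_abs, mul_assoc, mul_div_cancel_left₀ _ two_ne_zero]

lemma two_mul_mul_one_sub_le_sin_pi_mul {x : ℝ} (h0 : 0 ≤ x) (h1 : x ≤ 1) :
    2 * x * (1 - x) ≤ Real.sin (Real.pi * x) := by
  wlog hx : x ≤ 1 / 2 generalizing x
  · have hsin : Real.sin (Real.pi * (1 - x)) = Real.sin (Real.pi * x) := by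
      rw [mul_one_sub, Real.sin_pi_sub]
    linarith [this (x := 1 - x) (by linarith) (by linarith) (by linarith)]
  calc 2 * x * (1 - x) ≤ 2 * x := mul_le_of_le_one_right (by positivity) (by linarith)
    _ = 2 / Real.pi * (Real.pi * x) := by field_simp
    _ ≤ Real.sin (Real.pi * x) :=
      Real.mul_le_sin (by positivity) (by linarith [mul_le_mul_of_nonneg_left hx Real.pi_pos.le])

lemma norm_geom_sum_fourierChar_le {x : ℝ} (h0 : 0 < x) (h1 : x < 1) (n : ℕ) :
    ‖∑ i ∈ range n, (𝐞 x : ℂ) ^ i‖ ≤ 1 / (2 * x) + 1 / (2 * (1 - x)) := by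
  have h1x : 0 < 1 - x := sub_pos.2 h1
  have hdist : 4 * x * (1 - x) ≤ ‖(𝐞 x : ℂ) - 1‖ := by
    rw [norm_fourierChar_sub_one]
    linarith [two_mul_mul_one_sub_le_sin_pi_mul h0.le h1.le, le_abs_self (Real.sin (Real.pi * x))]
  have hne : (𝐞 x : ℂ) ≠ 1 :=
    sub_ne_zero.1 <| norm_pos_iff.1 <| lt_of_lt_of_le (by positivity) hdist
  calc ‖∑ i ∈ range n, (𝐞 x : ℂ) ^ i‖ ≤ 2 / ‖(𝐞 x : ℂ) - 1‖ :=
        norm_geom_sum_le_two_div_norm_sub_one (Circle.norm_coe _).le hne n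
    _ ≤ 2 / (4 * x * (1 - x)) := by gcongr
    _ = 1 / (2 * x) + 1 / (2 * (1 - x)) := by field_simp; ring

lemma norm_geom_sum_fourierChar_add_div_le {q : ℕ} {δ : ℝ} (hδ : |δ| ≤ 1 / (2 * q)) {k : ℕ}
    (hk0 : 0 < k) (hkq : k < q) (n : ℕ) :
    ‖∑ i ∈ range n, (𝐞 (δ + k / q) : ℂ) ^ i‖ ≤ q * ((k : ℝ)⁻¹ + ((q - k : ℕ) : ℝ)⁻¹) := by
  have h2q : (0 : ℝ) < 2 * q := by have := hk0.trans hkq; positivity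
  have hk1 : (1 : ℝ) ≤ k := by exact_mod_cast hk0
  have hqk1 : (1 : ℝ) ≤ (q - k : ℕ) := by exact_mod_cast Nat.sub_pos_of_lt hkq
  have hqk : ((q - k : ℕ) : ℝ) = q - k := Nat.cast_sub hkq.le
  obtain ⟨hδl, hδr⟩ : -1 ≤ δ * (2 * q) ∧ δ * (2 * q) ≤ 1 := by
    rw [← abs_le, abs_mul, abs_of_pos h2q]
    exact (le_div_iff₀ h2q).1 hδ
  have hscale : (δ + k / q) * (2 * q) = δ * (2 * q) + 2 * k := by
    have : (q : ℝ) ≠ 0 := (pos_of_mul_pos_right h2q zero_le_two).ne'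
    field_simp
  have hleft : k / (2 * q) ≤ δ + k / q := (div_le_iff₀ h2q).2 (by linarith)
  have hright : (q - k : ℕ) / (2 * q) ≤ 1 - (δ + k / q) := (div_le_iff₀ h2q).2 (by linarith)
  have hk2 : 0 < k / (2 * q : ℝ) := by positivity
  have hqk2 : 0 < (q - k : ℕ) / (2 * q : ℝ) := by positivity
  calc ‖∑ i ∈ range n, (𝐞 (δ + k / q) : ℂ) ^ i‖
      ≤ 1 / (2 * (δ + k / q)) + 1 / (2 * (1 - (δ + k / q))) :=
        norm_geom_sum_fourierChar_le (by linarith) (by linarith) n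
    _ ≤ 1 / (2 * (k / (2 * q))) + 1 / (2 * ((q - k : ℕ) / (2 * q))) := by gcongr
    _ = q * ((k : ℝ)⁻¹ + ((q - k : ℕ) : ℝ)⁻¹) := by field_simp

lemma sum_range_inv_succ_add_inv_sub (n : ℕ) :
    ∑ k ∈ range n, (((k + 1 : ℕ) : ℝ)⁻¹ + ((n - k : ℕ) : ℝ)⁻¹) = 2 * harmonic n := by
  have hreflect : ∑ k ∈ range n, ((n - k : ℕ) : ℝ)⁻¹ = ∑ k ∈ range n, ((k + 1 : ℕ) : ℝ)⁻¹ := by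
    rw [← sum_range_reflect]
    refine sum_congr rfl fun k hk ↦ ?_
    rw [show n - (n - 1 - k) = k + 1 by have := mem_range.1 hk; omega]
  rw [sum_add_distrib, hreflect, ← two_mul, harmonic]
  push_cast
  rfl

lemma sum_norm_geom_sum_fourierChar_add_div_le {q : ℕ} (hq : q ≠ 0) {δ : ℝ}
    (hδ : |δ| ≤ 1 / (2 * q)) (n : ℕ) :
    ∑ k ∈ range q, ‖∑ i ∈ range n, (𝐞 (δ + k / q) : ℂ) ^ i‖ ≤ n + 2 * q * (1 + Real.log q) := by
  obtain ⟨m, rfl⟩ := Nat.exists_eq_succ_of_ne_zero hq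
  rw [sum_range_succ', add_comm]
  have hnearest : ‖∑ i ∈ range n, (𝐞 (δ + (0 : ℕ) / (m + 1 : ℕ)) : ℂ) ^ i‖ ≤ n :=
    (norm_sum_le _ _).trans (by simp only [norm_pow, Circle.norm_coe, one_pow, sum_const,
      card_range, nsmul_eq_mul, mul_one, le_refl])
  have hharmonic : (harmonic m : ℝ) ≤ 1 + Real.log (m + 1 : ℕ) := by
    refine le_trans ?_ (harmonic_le_one_add_log (m + 1))
    rw [harmonic_succ]
    push_cast
    exact le_add_of_nonneg_right (by positivity)
  have hothers : ∑ k ∈ range m, ‖∑ i ∈ range n, (𝐞 (δ + (k + 1 : ℕ) / (m + 1 : ℕ)) : ℂ) ^ i‖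
      ≤ 2 * (m + 1 : ℕ) * (1 + Real.log (m + 1 : ℕ)) := calc
    _ ≤ ∑ k ∈ range m, (m + 1 : ℕ) * (((k + 1 : ℕ) : ℝ)⁻¹ + ((m - k : ℕ) : ℝ)⁻¹) := by
      refine sum_le_sum fun k hk ↦ ?_
      have := norm_geom_sum_fourierChar_add_div_le hδ k.succ_pos
        (Nat.succ_lt_succ (mem_range.1 hk)) n
      rwa [Nat.succ_sub_succ] at this
    _ = 2 * (m + 1 : ℕ) * harmonic m := by
      rw [← mul_sum, sum_range_inv_succ_add_inv_sub]; ring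
    _ ≤ 2 * (m + 1 : ℕ) * (1 + Real.log (m + 1 : ℕ)) := by gcongr
  exact add_le_add hnearest hothers

lemma stdAddChar_intCast_eq_fourierChar (q : ℕ) [NeZero q] (j : ℤ) :
    ZMod.stdAddChar (j : ZMod q) = (𝐞 (j / q) : ℂ) := by
  rw [ZMod.stdAddChar_coe, Real.fourierChar_apply]
  congr 1
  push_cast
  ring

lemma sum_zmod_eq_sum_range {A : Type*} [AddCommMonoid A] (q : ℕ) [NeZero q] (f : ZMod q → A) :
    ∑ k, f k = ∑ k ∈ range q, f k :=
  sum_nbij' ZMod.val (fun k : ℕ ↦ (k : ZMod q)) (fun k _ ↦ mem_range.2 k.val_lt)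
    (fun _ _ ↦ mem_univ _) (fun k _ ↦ ZMod.natCast_zmod_val k)
    (fun _ hk ↦ ZMod.val_cast_of_lt (mem_range.1 hk))
    (fun k _ ↦ congrArg f (ZMod.natCast_zmod_val k).symm)

lemma sum_norm_geom_sum_fourierChar_mul_stdAddChar_le (q : ℕ) [NeZero q] (θ : ℝ) (n : ℕ) :
    ∑ k : ZMod q, ‖∑ i ∈ range n, ((𝐞 θ : ℂ) * ZMod.stdAddChar k) ^ i‖
      ≤ n + 2 * q * (1 + Real.log q) := by
  have hq0 : (0 : ℝ) < q := Nat.cast_pos.2 (NeZero.pos q)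
  set j : ℤ := round (θ * q)
  set δ : ℝ := θ - j / q with hδ_def
  have hδ : |δ| ≤ 1 / (2 * q) := calc
    |δ| = |θ * q - j| / q := by
      rw [hδ_def, ← abs_of_pos hq0, ← abs_div, abs_of_pos hq0, sub_div,
        mul_div_cancel_right₀ _ hq0.ne']
    _ ≤ 1 / 2 / q := by gcongr; exact abs_sub_round _
    _ = 1 / (2 * q) := div_div _ _ _
  have hθ : (𝐞 θ : ℂ) = 𝐞 δ * ZMod.stdAddChar (j : ZMod q) := by
    rw [stdAddChar_intCast_eq_fourierChar, ← Circle.coe_mul, ← AddChar.map_add_eq_mul,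
      sub_add_cancel]
  calc ∑ k : ZMod q, ‖∑ i ∈ range n, ((𝐞 θ : ℂ) * ZMod.stdAddChar k) ^ i‖
      = ∑ k : ZMod q, ‖∑ i ∈ range n, ((𝐞 δ : ℂ) * ZMod.stdAddChar ((j : ZMod q) + k)) ^ i‖ := by
        simp_rw [hθ, AddChar.map_add_eq_mul, mul_assoc]
    _ = ∑ k : ZMod q, ‖∑ i ∈ range n, ((𝐞 δ : ℂ) * ZMod.stdAddChar k) ^ i‖ :=
        Equiv.sum_comp (Equiv.addLeft (j : ZMod q))
          fun k ↦ ‖∑ i ∈ range n, ((𝐞 δ : ℂ) * ZMod.stdAddChar k) ^ i‖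
    _ = ∑ k ∈ range q, ‖∑ i ∈ range n, (𝐞 (δ + k / q) : ℂ) ^ i‖ := by
        rw [sum_zmod_eq_sum_range]
        refine sum_congr rfl fun k _ ↦ ?_
        rw [← Int.cast_natCast k, stdAddChar_intCast_eq_fourierChar, ← Circle.coe_mul,
          ← AddChar.map_add_eq_mul, Int.cast_natCast]
    _ ≤ n + 2 * q * (1 + Real.log q) :=
        sum_norm_geom_sum_fourierChar_add_div_le (NeZero.ne q) hδ n

end GeometricSums

section Completion

variable {q : ℕ} [NeZero q] {E : Type*}

lemma sum_range_pow_smul_eq_sum_dft [AddCommGroup E] [Module ℂ E] (Φ : ZMod q → E) (z : ℂ)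
    (s u : ZMod q) (n : ℕ) :
    ∑ i ∈ range n, z ^ i • Φ (s + u * i) = (q : ℂ)⁻¹ • ∑ k : ZMod q,
      (ZMod.stdAddChar (k * s) * ∑ i ∈ range n, (z * ZMod.stdAddChar (u * k)) ^ i)
        • ZMod.dft Φ k := by
  have hinversion (x : ZMod q) :
      Φ x = (q : ℂ)⁻¹ • ∑ k : ZMod q, ZMod.stdAddChar (k * x) • ZMod.dft Φ k := by
    rw [← ZMod.invDFT_apply, LinearEquiv.symm_apply_apply]
  have hchar (k : ZMod q) (i : ℕ) : ZMod.stdAddChar (k * (s + u * (i : ZMod q)))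
      = ZMod.stdAddChar (k * s) * ZMod.stdAddChar (u * k) ^ i := by
    rw [← AddChar.map_nsmul_eq_pow, ← AddChar.map_add_eq_mul, nsmul_eq_mul]
    congr 1
    ring
  simp_rw [hinversion (s + u * _), hchar, smul_comm _ (q : ℂ)⁻¹, ← smul_sum]
  congr 1
  simp_rw [smul_sum, mul_sum, sum_smul]
  rw [sum_comm]
  refine sum_congr rfl fun k _ ↦ sum_congr rfl fun i _ ↦ ?_
  rw [smul_smul, mul_pow]
  congr 1
  ring

lemma norm_sum_range_fourierChar_pow_smul_le [NormedAddCommGroup E] [NormedSpace ℂ E]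
    {Φ : ZMod q → E} {B : ℝ} (hB : ∀ k, ‖ZMod.dft Φ k‖ ≤ B) (θ : ℝ) (s : ZMod q) (u : (ZMod q)ˣ)
    (n : ℕ) :
    ‖∑ i ∈ range n, (𝐞 θ : ℂ) ^ i • Φ (s + u * i)‖ ≤ B * (n / q + 2 * (1 + Real.log q)) := by
  have hq0 : (q : ℝ) ≠ 0 := Nat.cast_ne_zero.2 (NeZero.ne q)
  have hB0 : 0 ≤ B := (norm_nonneg _).trans (hB 0)
  rw [sum_range_pow_smul_eq_sum_dft, norm_smul, norm_inv, Complex.norm_natCast]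
  set G : ZMod q → ℝ := fun k ↦ ‖∑ i ∈ range n, ((𝐞 θ : ℂ) * ZMod.stdAddChar k) ^ i‖
  calc (q : ℝ)⁻¹ * ‖∑ k : ZMod q, (ZMod.stdAddChar (k * s)
          * ∑ i ∈ range n, ((𝐞 θ : ℂ) * ZMod.stdAddChar (↑u * k)) ^ i) • ZMod.dft Φ k‖
      ≤ (q : ℝ)⁻¹ * ∑ k : ZMod q, G (↑u * k) * B := by
        gcongr
        refine norm_sum_le_of_le _ fun k _ ↦ ?_
        rw [norm_smul, norm_mul, AddChar.norm_apply, one_mul]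
        exact mul_le_mul_of_nonneg_left (hB k) (norm_nonneg _)
    _ = (q : ℝ)⁻¹ * ((∑ k : ZMod q, G k) * B) := by
        rw [← sum_mul, ← Equiv.sum_comp (Units.mulLeft u) G]
        rfl
    _ ≤ (q : ℝ)⁻¹ * ((n + 2 * q * (1 + Real.log q)) * B) := by
        gcongr
        exact sum_norm_geom_sum_fourierChar_mul_stdAddChar_le q θ n
    _ = B * (n / q + 2 * (1 + Real.log q)) := by field_simp

end Completion

section PrimitiveCharacters

variable {q : ℕ} [NeZero q] {χ : DirichletCharacter ℂ q}

lemma gaussSum_mul_star_gaussSum_of_isPrimitive (hχ : χ.IsPrimitive) :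
    gaussSum χ ZMod.stdAddChar * star (gaussSum χ ZMod.stdAddChar) = q := by
  have hdft : ∑ k : ZMod q, ZMod.stdAddChar k * ZMod.dft χ k = q := by
    simpa [ZMod.dft_apply] using congrFun (ZMod.dft_dft χ) (-1)
  rw [star_gaussSum_eq, ← hdft, gaussSum.eq_def χ⁻¹, mul_sum, ← Equiv.sum_comp (Equiv.neg (ZMod q))]
  refine sum_congr rfl fun k _ ↦ ?_
  rw [hχ.fourierTransform_eq_inv_mul_gaussSum, Equiv.neg_apply, AddChar.inv_apply, neg_neg]
  ring

lemma norm_gaussSum_of_isPrimitive (hχ : χ.IsPrimitive) :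
    ‖gaussSum χ ZMod.stdAddChar‖ = √q := by
  have hsq := gaussSum_mul_star_gaussSum_of_isPrimitive hχ
  rw [Complex.star_def, Complex.mul_conj'] at hsq
  rw [eq_comm, Real.sqrt_eq_iff_eq_sq (Nat.cast_nonneg q) (norm_nonneg _), eq_comm]
  exact_mod_cast hsq

lemma norm_dft_le_sqrt_of_isPrimitive (hχ : χ.IsPrimitive) (k : ZMod q) :
    ‖ZMod.dft χ k‖ ≤ √q := by
  rw [hχ.fourierTransform_eq_inv_mul_gaussSum, norm_mul, norm_gaussSum_of_isPrimitive hχ]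
  exact mul_le_of_le_one_left (Real.sqrt_nonneg _) (DirichletCharacter.norm_le_one _ _)

end PrimitiveCharacters

section ArithmeticProgressions

lemma sum_range_filter_mod_eq {A : Type*} [AddCommMonoid A] {d r : ℕ} (hr : r < d) (M : ℕ)
    (f : ℕ → A) :
    ∑ v ∈ range M with v % d = r, f v = ∑ i ∈ range ((M - r) ⌈/⌉ d), f (r + d * i) := by
  have hd : 0 < d := r.zero_le.trans_lt hr
  have hlt (i : ℕ) : i < (M - r) ⌈/⌉ d ↔ r + d * i < M := by
    rw [← not_le, ceilDiv_le_iff_le_mul hd]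
    omega
  symm
  refine sum_nbij' (fun i ↦ r + d * i) (· / d) (fun i hi ↦ ?_) (fun v hv ↦ ?_) (fun i _ ↦ ?_)
    (fun v hv ↦ ?_) fun _ _ ↦ rfl
  · rw [mem_filter, mem_range, ← hlt, Nat.add_mul_mod_self_left, Nat.mod_eq_of_lt hr]
    exact ⟨mem_range.1 hi, rfl⟩
  · obtain ⟨hvM, rfl⟩ := mem_filter.1 hv
    rwa [mem_range, hlt, Nat.mod_add_div, ← mem_range]
  · rw [Nat.add_mul_div_left _ _ hd, Nat.div_eq_of_lt hr, zero_add]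
  · obtain ⟨-, rfl⟩ := mem_filter.1 hv
    exact Nat.mod_add_div v d

lemma cast_sub_ceilDiv_le {d : ℕ} (hd : 0 < d) (M r : ℕ) :
    (((M - r) ⌈/⌉ d : ℕ) : ℝ) ≤ M / d + 1 := by
  have hd0 : (0 : ℝ) < d := Nat.cast_pos.2 hd
  calc (((M - r) ⌈/⌉ d : ℕ) : ℝ) ≤ ((M - r + d - 1 : ℕ) : ℝ) / d := Nat.cast_div_le
    _ ≤ ((M + d : ℕ) : ℝ) / d := by gcongr; omega
    _ = M / d + 1 := by rw [Nat.cast_add, add_div, div_self hd0.ne']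

end ArithmeticProgressions

section IncompleteCharacterSums

lemma norm_sum_filter_mod_fourierChar_mul_le_of_isPrimitive {q : ℕ} [NeZero q]
    {χ : DirichletCharacter ℂ q} (hχ : χ.IsPrimitive) {d r : ℕ} (hr : r < d) (hd : d.Coprime q)
    (c : ZMod q) (ξ : ℝ) (M : ℕ) :
    ‖∑ v ∈ range M with v % d = r, (𝐞 (ξ * v) : ℂ) * χ (v + c)‖
      ≤ √q * ((M / d + 1) / q + 2 * (1 + Real.log q)) := by
  have hterm (i : ℕ) : (𝐞 (ξ * (r + d * i : ℕ)) : ℂ) * χ ((r + d * i : ℕ) + c)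
      = 𝐞 (ξ * r) * ((𝐞 (ξ * d) : ℂ) ^ i • χ (r + c + ZMod.unitOfCoprime d hd * i)) := by
    have hphase : ξ * (r + d * i : ℕ) = ξ * r + i • (ξ * d) := by
      rw [nsmul_eq_mul]; push_cast; ring
    have harg : ((r + d * i : ℕ) + c : ZMod q) = r + c + d * i := by push_cast; ring
    rw [hphase, AddChar.map_add_eq_mul, AddChar.map_nsmul_eq_pow, harg,
      ZMod.coe_unitOfCoprime, smul_eq_mul, Circle.coe_mul, Circle.coe_pow, mul_assoc]
  rw [sum_range_filter_mod_eq hr, sum_congr rfl fun i _ ↦ hterm i, ← mul_sum, norm_mul,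
    Circle.norm_coe, one_mul]
  refine (norm_sum_range_fourierChar_pow_smul_le (norm_dft_le_sqrt_of_isPrimitive hχ) _ _ _
    _).trans ?_
  gcongr
  exact cast_sub_ceilDiv_le (r.zero_le.trans_lt hr) M r

lemma add_one_div_add_two_mul_one_add_log_le {q : ℝ} (hq : 2 ≤ q) {y : ℝ} (hy : 0 ≤ y) :
    (y + 1) / q + 2 * (1 + Real.log q) ≤ 8 * (1 + y / q) * Real.log q := by
  have hlog : 1 / 2 ≤ Real.log q := by
    linarith [Real.log_two_gt_d9, Real.log_le_log two_pos hq]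
  have hinv : 1 / q ≤ 1 := div_le_one_of_le₀ (by linarith) (by linarith)
  have hyq : 0 ≤ y / q := by positivity
  rw [add_div]
  linarith [mul_le_mul_of_nonneg_left hlog hyq]

end IncompleteCharacterSums

open scoped Classical in
/-- Incomplete character sum bound via Gauss sums (used for (5.6)): for `χ` primitive
modulo `q ≥ 2` and `q₀` coprime to `q`,
`|∑_{0 ≤ v < M, v ≡ a (mod q₀)} e(ξ v) χ(v + c)| ≤ C (1 + M/(q₀ q)) √q log q`. -/
theorem incomplete_character_sum_bound :
    ∃ C : ℝ, 0 < C ∧ ∀ q : ℕ, 2 ≤ q →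
      ∀ χ : DirichletCharacter ℂ q, χ.IsPrimitive →
      ∀ q₀ : ℕ, 0 < q₀ → Nat.Coprime q₀ q →
      ∀ a c : ℤ, ∀ ξ : ℝ, ∀ M : ℕ, 1 ≤ M →
      norm (∑ v ∈ (Finset.range M).filter
            (fun v : ℕ => (v : ℤ) % (q₀ : ℤ) = a % (q₀ : ℤ)),
          Complex.exp (2 * Real.pi * Complex.I * ξ * v) * χ (((v : ℤ) + c : ℤ) : ZMod q))
        ≤ C * (1 + (M : ℝ) / ((q₀ : ℝ) * q)) * Real.sqrt q * Real.log q := by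
  refine ⟨8, by norm_num, fun q hq χ hχ q₀ hq₀ hcop a c ξ M _ ↦ ?_⟩
  have : NeZero q := ⟨by omega⟩
  have hq₀' : (0 : ℤ) < q₀ := Int.natCast_pos.2 hq₀
  obtain ⟨r, hr⟩ := Int.eq_ofNat_of_zero_le (Int.emod_nonneg a hq₀'.ne')
  have hrq₀ : r < q₀ := by exact_mod_cast hr ▸ Int.emod_lt_of_pos a hq₀'
  have hsum : ∑ v ∈ (Finset.range M).filter (fun v : ℕ ↦ (v : ℤ) % (q₀ : ℤ) = a % (q₀ : ℤ)),
        Complex.exp (2 * Real.pi * Complex.I * ξ * v) * χ (((v : ℤ) + c : ℤ) : ZMod q)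
      = ∑ v ∈ range M with v % q₀ = r, (𝐞 (ξ * v) : ℂ) * χ (v + (c : ZMod q)) := by
    refine sum_congr (filter_congr fun v _ ↦ by rw [hr]; norm_cast) fun v _ ↦ ?_
    rw [Real.fourierChar_apply]
    push_cast
    ring_nf
  calc _ ≤ √q * ((M / q₀ + 1) / q + 2 * (1 + Real.log q)) :=
        hsum ▸ norm_sum_filter_mod_fourierChar_mul_le_of_isPrimitive hχ hrq₀ hcop c ξ M
    _ ≤ √q * (8 * (1 + M / q₀ / q) * Real.log q) := by
        gcongr
        exact add_one_div_add_two_mul_one_add_log_le (by exact_mod_cast hq) (by positivity)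
    _ = 8 * (1 + M / (q₀ * q)) * √q * Real.log q := by rw [div_div]; ring
end

section
/- There is an absolute constant C such that the following holds. Let q ≥ 1 be an integer, χ a Dirichlet character modulo q, and let T ≥ 2 and x ≥ 2 be reals with (qT)^{20} ≤ x. Let Z be the set of zeros ρ of the Dirichlet L-function L(s, χ) with 1/2 ≤ Re ρ < 1 and |Im ρ| ≤ T. Assume that for every α ∈ [1/2, 1] the number of ρ ∈ Z with Re ρ ≥ α is at most (qT)^{8(1−α)}, and let η be a real with 0 < η ≤ 1/2 such that Re ρ ≤ 1 − η for every ρ ∈ Z. Then ∑_{ρ ∈ Z} x^{Re ρ − 1} ≤ C x^{−η/2}. -/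
/-!
List the zeros by decreasing real part. If `ρ` is the `n`-th zero, the density estimate at
`α = Re ρ` gives `n ≤ (qT) ^ (8 (1 - Re ρ)) ≤ x ^ (2 / 5 * (1 - Re ρ))`, which inverts to
`x ^ ((Re ρ - 1) / 2) ≤ n ^ (-5 / 4)`, a summable bound. So half of the exponent `Re ρ - 1` pays for
the sum over the zeros, and the other half contributes the factor `x ^ (-η / 2)` by the zero-free
region.
-/

open Finset

section RankBounds

variable {ι α M : Type*} [LinearOrder α]

-- Remove a minimiser of `f`: its rank is `#s`, and the ranks of the other elements do not increase.
lemma sum_le_sum_Icc_card_of_le_rank [AddCommMonoid M] [PartialOrder M] [IsOrderedAddMonoid M]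
    (f : ι → α) {g : ι → M} {b : ℕ → M} (hb : AntitoneOn b (Set.Ici 1)) (s : Finset ι)
    (hg : ∀ i ∈ s, g i ≤ b #{j ∈ s | f i ≤ f j}) :
    ∑ i ∈ s, g i ≤ ∑ k ∈ Icc 1 #s, b k := by
  classical
  induction s using Finset.induction_on_min_value f with
  | empty => simp
  | insert a s ha hmin ih =>
    have hmin_rank : #{j ∈ insert a s | f a ≤ f j} = #s + 1 := by
      rw [filter_true_of_mem (by simpa using hmin), card_insert_of_notMem ha]
    have hsum : ∑ i ∈ s, g i ≤ ∑ k ∈ Icc 1 #s, b k := by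
      refine ih fun i hi ↦ (hg i (mem_insert_of_mem hi)).trans ?_
      have hrank : 1 ≤ #{j ∈ s | f i ≤ f j} := card_pos.2 ⟨i, by simp [hi]⟩
      have hrank_le : #{j ∈ s | f i ≤ f j} ≤ #{j ∈ insert a s | f i ≤ f j} :=
        card_le_card (filter_subset_filter _ (subset_insert a s))
      exact hb hrank (hrank.trans hrank_le) hrank_le
    rw [sum_insert ha, card_insert_of_notMem ha, sum_Icc_succ_top (by lia), add_comm]
    exact add_le_add hsum (hmin_rank ▸ hg a (mem_insert_self a s))

lemma sum_le_tsum_rpow_neg_of_le_rank (f : ι → α) {g : ι → ℝ} {p : ℝ} (hp : 1 < p) (s : Finset ι)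
    (hg : ∀ i ∈ s, g i ≤ (#{j ∈ s | f i ≤ f j} : ℝ) ^ (-p)) :
    ∑ i ∈ s, g i ≤ ∑' k : ℕ, (k : ℝ) ^ (-p) := by
  have hanti : AntitoneOn (fun k : ℕ ↦ (k : ℝ) ^ (-p)) (Set.Ici 1) := fun m hm n _ hmn ↦
    Real.rpow_le_rpow_of_nonpos (by exact_mod_cast hm) (by exact_mod_cast hmn) (by linarith)
  have hsummable : Summable fun k : ℕ ↦ (k : ℝ) ^ (-p) :=
    Real.summable_nat_rpow.2 (by linarith)
  exact (sum_le_sum_Icc_card_of_le_rank f hanti s hg).trans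
    (hsummable.sum_le_tsum _ fun k _ ↦ by positivity)

end RankBounds

lemma tsum_nat_rpow_neg_pos {p : ℝ} (hp : 1 < p) : 0 < ∑' k : ℕ, (k : ℝ) ^ (-p) :=
  (Real.summable_nat_rpow.2 (by linarith)).tsum_pos (fun k ↦ by positivity) 1 (by simp)

lemma rpow_neg_mul_le_rpow_neg_div {n x c δ t : ℝ} (hn : 0 < n) (hx : 0 ≤ x) (hc : 0 < c)
    (hδ : 0 ≤ δ) (h : n ≤ x ^ (c * t)) : x ^ (-(δ * t)) ≤ n ^ (-(δ / c)) := by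
  calc x ^ (-(δ * t)) = (x ^ (c * t)) ^ (-(δ / c)) := by
        rw [← Real.rpow_mul hx]
        field_simp
    _ ≤ n ^ (-(δ / c)) :=
        Real.rpow_le_rpow_of_nonpos hn h (neg_nonpos.2 (by positivity))

lemma rpow_mul_le_rpow_div_mul {x y A B t : ℝ} (hy : 0 ≤ y) (hA : 0 ≤ A) (hB : 0 < B)
    (ht : 0 ≤ t) (hyx : y ^ B ≤ x) : y ^ (A * t) ≤ x ^ (A / B * t) := by
  calc y ^ (A * t) = (y ^ B) ^ (A / B * t) := by
        rw [← Real.rpow_mul hy]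
        field_simp
    _ ≤ x ^ (A / B * t) := by gcongr

section DensitySums

variable {ι : Type*} {s : Finset ι} {σ : ι → ℝ} {x : ℝ}

lemma sum_rpow_le_tsum_of_density {c δ : ℝ} (hx : 0 ≤ x) (hc : 0 < c) (hcδ : c < δ)
    (hdensity : ∀ i ∈ s, (#{j ∈ s | σ i ≤ σ j} : ℝ) ≤ x ^ (c * (1 - σ i))) :
    ∑ i ∈ s, x ^ (-(δ * (1 - σ i))) ≤ ∑' k : ℕ, (k : ℝ) ^ (-(δ / c)) := by
  refine sum_le_tsum_rpow_neg_of_le_rank σ ((one_lt_div hc).2 hcδ) s fun i hi ↦ ?_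
  have hrank : 0 < #{j ∈ s | σ i ≤ σ j} := card_pos.2 ⟨i, by simp [hi]⟩
  exact rpow_neg_mul_le_rpow_neg_div (by exact_mod_cast hrank) hx hc (hc.trans hcδ).le
    (hdensity i hi)

lemma sum_rpow_sub_one_le_mul_rpow {δ η : ℝ} (hx : 1 ≤ x) (hδ : δ ≤ 1)
    (hσ : ∀ i ∈ s, σ i ≤ 1 - η) :
    ∑ i ∈ s, x ^ (σ i - 1) ≤ (∑ i ∈ s, x ^ (-(δ * (1 - σ i)))) * x ^ (-((1 - δ) * η)) := by
  rw [sum_mul]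
  refine sum_le_sum fun i hi ↦ ?_
  rw [← Real.rpow_add (by linarith)]
  exact Real.rpow_le_rpow_of_exponent_le hx (by nlinarith [hσ i hi])

end DensitySums

theorem zero_density_sum_bound_general {A B δ : ℝ} (hA : 0 < A) (hB : 0 < B) (hAB : A / B < δ)
    (hδ : δ ≤ 1) :
    ∃ C : ℝ, 0 < C ∧ ∀ {ι : Type*} (Z : Finset ι) (σ : ι → ℝ) (x y η : ℝ),
      1 ≤ x → 0 ≤ y → y ^ B ≤ x → 0 ≤ η →
      (∀ i ∈ Z, (#{j ∈ Z | σ i ≤ σ j} : ℝ) ≤ y ^ (A * (1 - σ i))) →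
      (∀ i ∈ Z, σ i ≤ 1 - η) →
      ∑ i ∈ Z, x ^ (σ i - 1) ≤ C * x ^ (-((1 - δ) * η)) := by
  have hc : 0 < A / B := div_pos hA hB
  refine ⟨∑' k : ℕ, (k : ℝ) ^ (-(δ / (A / B))), tsum_nat_rpow_neg_pos ((one_lt_div hc).2 hAB), ?_⟩
  intro ι Z σ x y η hx hy hyx hη hdensity hσ
  have hdensity_x : ∀ i ∈ Z, (#{j ∈ Z | σ i ≤ σ j} : ℝ) ≤ x ^ (A / B * (1 - σ i)) := fun i hi ↦
    (hdensity i hi).trans (rpow_mul_le_rpow_div_mul hy hA.le hB (by linarith [hσ i hi]) hyx)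
  calc ∑ i ∈ Z, x ^ (σ i - 1)
      ≤ (∑ i ∈ Z, x ^ (-(δ * (1 - σ i)))) * x ^ (-((1 - δ) * η)) :=
        sum_rpow_sub_one_le_mul_rpow hx hδ hσ
    _ ≤ (∑' k : ℕ, (k : ℝ) ^ (-(δ / (A / B)))) * x ^ (-((1 - δ) * η)) := by
        gcongr
        exact sum_rpow_le_tsum_of_density (by linarith) hc hAB hdensity_x

open scoped Classical in
/-- The zero-density estimate implies the bound (6.5):
if the zeros `ρ` of `L(s, χ)` with `1/2 ≤ Re ρ < 1`, `|Im ρ| ≤ T` satisfy the density bound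
`N(α) ≤ (qT)^{8(1-α)}` and all have `Re ρ ≤ 1 - η`, then
`∑_ρ x^{Re ρ - 1} ≤ C x^{-η/2}` whenever `(qT)^{20} ≤ x`. -/
theorem zero_density_sum_bound :
    ∃ C : ℝ, 0 < C ∧ ∀ q : ℕ, 1 ≤ q → ∀ _ : NeZero q,
      ∀ χ : DirichletCharacter ℂ q,
      ∀ T x : ℝ, 2 ≤ T → 2 ≤ x → ((q : ℝ) * T) ^ (20 : ℕ) ≤ x →
      ∀ Z : Finset ℂ,
      (∀ ρ : ℂ, ρ ∈ Z ↔ DirichletCharacter.LFunction χ ρ = 0 ∧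
          1 / 2 ≤ ρ.re ∧ ρ.re < 1 ∧ |ρ.im| ≤ T) →
      (∀ α : ℝ, 1 / 2 ≤ α → α ≤ 1 →
        ((Z.filter (fun ρ => α ≤ ρ.re)).card : ℝ) ≤ ((q : ℝ) * T) ^ (8 * (1 - α))) →
      ∀ η : ℝ, 0 < η → η ≤ 1 / 2 → (∀ ρ ∈ Z, ρ.re ≤ 1 - η) →
      ∑ ρ ∈ Z, x ^ (ρ.re - 1) ≤ C * x ^ (-η / 2) := by
  obtain ⟨C, hC, hbound⟩ := zero_density_sum_bound_general (A := 8) (B := 20) (δ := 1 / 2)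
    (by norm_num) (by norm_num) (by norm_num) (by norm_num)
  refine ⟨C, hC, fun q _ _ χ T x hT hx hqx Z hZ hdensity η hη _ hZη ↦ ?_⟩
  convert hbound Z Complex.re x (q * T) η (by linarith) (by positivity) (by exact_mod_cast hqx)
    hη.le (fun ρ hρ ↦ ?_) hZη using 3
  · ring
  · obtain ⟨-, hre_ge, hre_lt, -⟩ := (hZ ρ).1 hρ
    exact hdensity ρ.re hre_ge hre_lt.le
end

section
/- Let q₁ and q₂ be coprime positive integers with q₂ squarefree, set q = q₁ q₂, let χ₁ be a primitive Dirichlet character modulo q₁, and let χ be the Dirichlet character modulo q induced by χ₁ (so χ(a) = χ₁(a) when gcd(a, q) = 1 and χ(a) = 0 otherwise). Then for every integer k: (τ(χ̄)/φ(q)) · ∑_{a=1}^{q} χ(a) e^{−2πi a k/q} = (q₁/φ(q₁)) · μ(gcd(q₂, k)) · χ̄₁(k) / φ(q₂/gcd(q₂, k)), where for a Dirichlet character ψ modulo Q the Gauss sum is τ(ψ) = ∑_{m=1}^{Q} ψ(m) e^{2πi m/Q}. -/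
/-- `e(x) = e^{2πix}`. -/
noncomputable def eexp (x : ℝ) : ℂ := Complex.exp (2 * Real.pi * Complex.I * x)

/-!
Write `c_n(k)` for the Ramanujan sum. By the Chinese remainder theorem, the Gauss sum over
`ZMod (q₁ * q₂)` of a character induced from modulus `q₁` splits as
`χ₁ q₂ * (Gauss sum of χ₁) * c_{q₂}`. The factors `χ₁ q₂` and `χ̄₁ q₂` cancel, and two products
remain. The first, `τ(χ̄₁) * ∑ χ₁(a) e(-ak/q₁) = q₁ * χ̄₁ k`, holds by orthogonality of additive
characters because `χ₁` is primitive. The second, `c_{q₂}(1) * c_{q₂}(-k)`, follows from the formula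
`c_n(k) = μ(n/g) φ(g)` with `g = gcd(n, k)`, valid for squarefree `n` by multiplicativity.
-/

open ZMod DirichletCharacter
open scoped ArithmeticFunction.Moebius Nat

section ChangeLevel

variable {R : Type*} [CommMonoidWithZero R]

theorem changeLevel_intCast_apply {n m : ℕ} (h : n ∣ m) (χ : DirichletCharacter R n) (a : ℤ) :
    changeLevel h χ (a : ZMod m) = if Int.gcd a m = 1 then χ (a : ZMod n) else 0 := by
  split_ifs with ha
  · exact changeLevel_eq_cast_of_dvd' χ h (Int.isCoprime_iff_gcd_eq_one.mpr ha)
  · refine MulChar.map_nonunit _ ?_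
    rwa [coe_int_isUnit_iff_isCoprime, isCoprime_comm, Int.isCoprime_iff_gcd_eq_one]

theorem changeLevel_mul_changeLevel_intCast_apply {m n : ℕ} (χ : DirichletCharacter R m)
    (ψ : DirichletCharacter R n) (a : ℤ) :
    (changeLevel (dvd_mul_right m n) χ * changeLevel (dvd_mul_left n m) ψ) (a : ZMod (m * n)) =
      χ (a : ZMod m) * ψ (a : ZMod n) := by
  rw [MulChar.mul_apply, changeLevel_intCast_apply, changeLevel_intCast_apply]
  split_ifs with ha
  · rfl
  rw [mul_zero, eq_comm]
  have hunit : ¬ (IsUnit (a : ZMod m) ∧ IsUnit (a : ZMod n)) := by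
    rwa [coe_int_isUnit_iff_isCoprime, coe_int_isUnit_iff_isCoprime, ← IsCoprime.mul_left_iff,
      ← Nat.cast_mul, isCoprime_comm, Int.isCoprime_iff_gcd_eq_one]
  rcases not_and_or.mp hunit with hm | hn
  · rw [χ.map_nonunit hm, zero_mul]
  · rw [ψ.map_nonunit hn, mul_zero]

end ChangeLevel

theorem inv_apply_mul_apply_of_isUnit {R K : Type*} [CommMonoid R] [CommMonoidWithZero K]
    (χ : MulChar R K) {a : R} (ha : IsUnit a) : χ⁻¹ a * χ a = 1 := by
  rw [← MulChar.mul_apply, inv_mul_cancel, MulChar.one_apply ha]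

theorem gaussSum_eq_mul_of_equiv_prod {R S T K : Type*} [CommRing R] [Fintype R] [CommRing S]
    [Fintype S] [CommRing T] [Fintype T] [CommRing K] (e : R ≃ S × T)
    {χ : MulChar R K} {χ₁ : MulChar S K} {χ₂ : MulChar T K}
    {ψ : AddChar R K} {ψ₁ : AddChar S K} {ψ₂ : AddChar T K}
    (hχ : ∀ r, χ r = χ₁ (e r).1 * χ₂ (e r).2) (hψ : ∀ r, ψ r = ψ₁ (e r).1 * ψ₂ (e r).2) :
    gaussSum χ ψ = gaussSum χ₁ ψ₁ * gaussSum χ₂ ψ₂ := by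
  calc gaussSum χ ψ
      = ∑ r, χ₁ (e r).1 * ψ₁ (e r).1 * (χ₂ (e r).2 * ψ₂ (e r).2) :=
        Finset.sum_congr rfl fun r _ ↦ by rw [hχ, hψ, mul_mul_mul_comm]
    _ = ∑ p : S × T, χ₁ p.1 * ψ₁ p.1 * (χ₂ p.2 * ψ₂ p.2) :=
        e.sum_comp fun p ↦ χ₁ p.1 * ψ₁ p.1 * (χ₂ p.2 * ψ₂ p.2)
    _ = gaussSum χ₁ ψ₁ * gaussSum χ₂ ψ₂ := by
        rw [Fintype.sum_prod_type, gaussSum, gaussSum, Fintype.sum_mul_sum]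

theorem gaussSum_mulShift_natCast_inv_mul {K : Type*} [CommRing K] {m n : ℕ} [NeZero m]
    (h : n.Coprime m) (χ : DirichletCharacter K m) (ψ : AddChar (ZMod m) K) (a : ZMod m) :
    gaussSum χ (ψ.mulShift ((n : ZMod m)⁻¹ * a)) = χ n * gaussSum χ (ψ.mulShift a) := by
  have hshift := gaussSum_mulShift χ (ψ.mulShift ((n : ZMod m)⁻¹ * a)) (unitOfCoprime n h)
  rw [coe_unitOfCoprime, AddChar.mulShift_mulShift, mul_right_comm, mul_comm (n : ZMod m)⁻¹,
    coe_mul_inv_eq_one n h, one_mul] at hshift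
  exact hshift.symm

section Primitive

variable {K : Type*} [CommRing K] [IsDomain K] {n : ℕ} [NeZero n] {χ : DirichletCharacter K n}
  {ψ : AddChar (ZMod n) K}

theorem gaussSum_mul_gaussSum_inv_of_isPrimitive (hχ : χ.IsPrimitive) (hψ : ψ.IsPrimitive) :
    gaussSum χ ψ * gaussSum χ⁻¹ ψ = χ (-1) * n := by
  calc gaussSum χ ψ * gaussSum χ⁻¹ ψ
      = gaussSum χ ψ * ∑ a, χ⁻¹ a * ψ a := rfl
    _ = ∑ a, gaussSum χ (ψ.mulShift a) * ψ a := by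
        rw [Finset.mul_sum]
        refine Finset.sum_congr rfl fun a _ ↦ ?_
        rw [gaussSum_mulShift_of_isPrimitive ψ hχ]
        ring
    _ = ∑ a, ∑ b, χ b * ψ (a * (b - -1)) := by
        refine Finset.sum_congr rfl fun a _ ↦ ?_
        rw [gaussSum, Finset.sum_mul]
        refine Finset.sum_congr rfl fun b _ ↦ ?_
        rw [AddChar.mulShift_apply, mul_assoc, ← AddChar.map_add_eq_mul]
        ring_nf
    _ = ∑ b, χ b * ∑ a, ψ (a * (b - -1)) := by
        rw [Finset.sum_comm]
        simp only [Finset.mul_sum]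
    _ = χ (-1) * n := by
        simp [AddChar.sum_mulShift _ hψ, sub_eq_zero, ZMod.card, -sub_neg_eq_add]

theorem gaussSum_inv_mul_gaussSum_mulShift_neg (hχ : χ.IsPrimitive) (hψ : ψ.IsPrimitive)
    (k : ZMod n) :
    gaussSum χ⁻¹ ψ * gaussSum χ (ψ.mulShift (-k)) = n * χ⁻¹ k := by
  calc gaussSum χ⁻¹ ψ * gaussSum χ (ψ.mulShift (-k))
      = χ⁻¹ (-1 * k) * (gaussSum χ ψ * gaussSum χ⁻¹ ψ) := by
        rw [gaussSum_mulShift_of_isPrimitive ψ hχ, neg_one_mul]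
        ring
    _ = χ⁻¹ (-1) * χ (-1) * (n * χ⁻¹ k) := by
        rw [gaussSum_mul_gaussSum_inv_of_isPrimitive hχ hψ, map_mul]
        ring
    _ = n * χ⁻¹ k := by rw [inv_apply_mul_apply_of_isUnit χ isUnit_one.neg, one_mul]

end Primitive

section CoprimeModuli

variable {m n : ℕ} [NeZero m] [NeZero n]

/-- Dividing Bézout's relation `m * u + n * v = 1` by `m * n` splits `x / (m * n)` into
`v * x / m + u * x / n`. -/
theorem stdAddChar_intCast_eq_mul_of_coprime (h : m.Coprime n) (x : ℤ) :
    stdAddChar (x : ZMod (m * n)) =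
      stdAddChar ((n : ZMod m)⁻¹ * (x : ZMod m)) * stdAddChar ((m : ZMod n)⁻¹ * (x : ZMod n)) := by
  have bezout : (m * m.gcdA n + n * m.gcdB n : ℤ) = 1 := by
    rw [← Nat.gcd_eq_gcd_ab, h.gcd_eq_one, Nat.cast_one]
  have inv_n : (n : ZMod m)⁻¹ = (m.gcdB n : ZMod m) :=
    ZMod.inv_eq_of_mul_eq_one _ _ _ (by simpa using congrArg (Int.cast : ℤ → ZMod m) bezout)
  have inv_m : (m : ZMod n)⁻¹ = (m.gcdA n : ZMod n) :=
    ZMod.inv_eq_of_mul_eq_one _ _ _ (by simpa using congrArg (Int.cast : ℤ → ZMod n) bezout)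
  have bezout_complex : (m * m.gcdA n + n * m.gcdB n : ℂ) = 1 := by exact_mod_cast bezout
  have hm : (m : ℂ) ≠ 0 := NeZero.ne _
  have hn : (n : ℂ) ≠ 0 := NeZero.ne _
  rw [inv_n, inv_m, ← Int.cast_mul, ← Int.cast_mul, stdAddChar_coe, stdAddChar_coe,
    stdAddChar_coe, ← Complex.exp_add]
  congr 1
  push_cast
  field_simp
  linear_combination -(x : ℂ) * bezout_complex

theorem gaussSum_changeLevel_mul_changeLevel (h : m.Coprime n) (χ : DirichletCharacter ℂ m)
    (ψ : DirichletCharacter ℂ n) (k : ℤ) :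
    gaussSum (changeLevel (dvd_mul_right m n) χ * changeLevel (dvd_mul_left n m) ψ)
        (stdAddChar.mulShift (k : ZMod (m * n))) =
      χ n * gaussSum χ (stdAddChar.mulShift (k : ZMod m)) *
        (ψ m * gaussSum ψ (stdAddChar.mulShift (k : ZMod n))) := by
  rw [← gaussSum_mulShift_natCast_inv_mul h.symm, ← gaussSum_mulShift_natCast_inv_mul h]
  refine gaussSum_eq_mul_of_equiv_prod (chineseRemainder h).toEquiv (fun r ↦ ?_) (fun r ↦ ?_)
  all_goals obtain ⟨x, rfl⟩ := intCast_surjective r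
  · simpa using changeLevel_mul_changeLevel_intCast_apply χ ψ x
  · simpa [mul_assoc] using stdAddChar_intCast_eq_mul_of_coprime h (k * x)

/-- The Ramanujan sum `c_n(k)`, the sum of `e^{2πiak/n}` over the residues `a` prime to `n`,
encoded as a Gauss sum of the principal character modulo `n`. -/
noncomputable def ramanujanSum (n : ℕ) [NeZero n] (k : ℤ) : ℂ :=
  gaussSum (1 : DirichletCharacter ℂ n) (stdAddChar.mulShift (k : ZMod n))

theorem gaussSum_changeLevel_of_coprime (h : m.Coprime n) (χ : DirichletCharacter ℂ m) (k : ℤ) :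
    gaussSum (changeLevel (dvd_mul_right m n) χ) (stdAddChar.mulShift (k : ZMod (m * n))) =
      χ n * gaussSum χ (stdAddChar.mulShift (k : ZMod m)) * ramanujanSum n k := by
  have hunit : IsUnit (m : ZMod n) := (isUnit_iff_coprime m n).mpr h
  simpa [MulChar.one_apply hunit, ramanujanSum] using
    gaussSum_changeLevel_mul_changeLevel h χ (1 : DirichletCharacter ℂ n) k

theorem ramanujanSum_mul_of_coprime (h : m.Coprime n) (k : ℤ) :
    ramanujanSum (m * n) k = ramanujanSum m k * ramanujanSum n k := by
  have hunit : IsUnit (n : ZMod m) := (isUnit_iff_coprime n m).mpr h.symm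
  simpa [MulChar.one_apply hunit, ramanujanSum] using
    gaussSum_changeLevel_of_coprime h (1 : DirichletCharacter ℂ m) k

end CoprimeModuli

theorem ramanujanSum_of_dvd {n : ℕ} [NeZero n] {k : ℤ} (h : (n : ℤ) ∣ k) :
    ramanujanSum n k = φ n := by
  rw [ramanujanSum, (intCast_zmod_eq_zero_iff_dvd k n).mpr h, AddChar.mulShift_zero,
    gaussSum_one_one, Nat.card_eq_fintype_card, card_units_eq_totient]

theorem ramanujanSum_prime_of_not_dvd {p : ℕ} [NeZero p] (hp : p.Prime) {k : ℤ}
    (h : ¬ (p : ℤ) ∣ k) : ramanujanSum p k = -1 := by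
  have : Fact p.Prime := ⟨hp⟩
  refine gaussSum_one_left (isPrimitive_stdAddChar p ?_)
  rwa [ne_eq, intCast_zmod_eq_zero_iff_dvd]

theorem ramanujanSum_prime {p : ℕ} [NeZero p] (hp : p.Prime) (k : ℤ) :
    ramanujanSum p k = μ (p / Int.gcd p k) * φ (Int.gcd p k) := by
  by_cases h : (p : ℤ) ∣ k
  · have hgcd : Int.gcd p k = p := by
      simpa [Int.gcd_def] using Nat.gcd_eq_left (Int.natCast_dvd.mp h)
    simp [ramanujanSum_of_dvd h, hgcd, Nat.div_self hp.pos]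
  · have hgcd : Int.gcd p k = 1 := by
      rwa [← Int.isCoprime_iff_gcd_eq_one, (Nat.prime_iff_prime_int.mp hp).coprime_iff_not_dvd]
    simp [ramanujanSum_prime_of_not_dvd hp h, hgcd, ArithmeticFunction.moebius_apply_prime hp]

theorem ramanujanSum_of_squarefree {n : ℕ} [hn0 : NeZero n] (hn : Squarefree n) (k : ℤ) :
    ramanujanSum n k = μ (n / Int.gcd n k) * φ (Int.gcd n k) := by
  have hgcd_dvd (a : ℕ) : Int.gcd a k ∣ a := Int.gcd_dvd_natAbs_left a k
  induction n using induction_on_primes generalizing hn0 with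
  | zero => exact absurd rfl hn0.ne
  | one => simp [ramanujanSum_of_dvd (one_dvd k)]
  | prime_mul p n hp ih =>
    obtain ⟨hpn, -, hn⟩ := Nat.squarefree_mul_iff.mp hn
    have : NeZero p := ⟨hp.ne_zero⟩
    have : NeZero n := ⟨hn.ne_zero⟩
    have hgcd : Int.gcd (p * n : ℕ) k = Int.gcd p k * Int.gcd n k := by
      simpa [Int.gcd_def, Int.natAbs_mul, Nat.gcd_comm] using hpn.gcd_mul k.natAbs
    have hcoprime_gcd : (Int.gcd p k).Coprime (Int.gcd n k) :=
      hpn.of_dvd (hgcd_dvd p) (hgcd_dvd n)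
    have hcoprime_div : (p / Int.gcd p k).Coprime (n / Int.gcd n k) :=
      hpn.of_dvd (Nat.div_dvd_of_dvd (hgcd_dvd p)) (Nat.div_dvd_of_dvd (hgcd_dvd n))
    rw [ramanujanSum_mul_of_coprime hpn, ramanujanSum_prime hp, ih hn, hgcd,
      ← Nat.div_mul_div_comm (hgcd_dvd p) (hgcd_dvd n), Nat.totient_mul hcoprime_gcd,
      ArithmeticFunction.isMultiplicative_moebius.map_mul_of_coprime hcoprime_div]
    push_cast
    ring

theorem ramanujanSum_one_mul_ramanujanSum_of_squarefree {n : ℕ} [NeZero n] (hn : Squarefree n)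
    (k : ℤ) :
    ramanujanSum n 1 * ramanujanSum n k = μ (Int.gcd n k) * φ n / φ (n / Int.gcd n k) := by
  rw [ramanujanSum_of_squarefree hn, ramanujanSum_of_squarefree hn, Int.gcd_one, Nat.div_one,
    Nat.totient_one, Nat.cast_one, mul_one]
  obtain ⟨d, hd⟩ : Int.gcd n k ∣ n := Int.gcd_dvd_natAbs_left n k
  set g := Int.gcd n k
  obtain ⟨hgd, hg, hd_sqf⟩ := Nat.squarefree_mul_iff.mp (hd ▸ hn)
  have hdiv : n / g = d := Nat.div_eq_of_eq_mul_right hg.ne_zero.bot_lt hd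
  have hmoebius : μ n = μ g * μ d := by
    rw [hd, ArithmeticFunction.isMultiplicative_moebius.map_mul_of_coprime hgd]
  have htotient : φ n = φ g * φ d := by rw [hd, Nat.totient_mul hgd]
  have hmoebius_sq : (μ d : ℂ) ^ 2 = 1 := by
    exact_mod_cast ArithmeticFunction.moebius_sq_eq_one_of_squarefree hd_sqf
  have htotient_ne : (φ d : ℂ) ≠ 0 :=
    Nat.cast_ne_zero.mpr (Nat.totient_pos.mpr hd_sqf.ne_zero.bot_lt).ne'
  rw [hdiv, hmoebius, htotient, eq_div_iff htotient_ne]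
  push_cast
  linear_combination (μ g * φ g * φ d : ℂ) * hmoebius_sq

theorem sum_Icc_one_natCast {M : Type*} [AddCommMonoid M] {n : ℕ} [NeZero n] (f : ZMod n → M) :
    ∑ a ∈ Finset.Icc 1 n, f a = ∑ x, f x := by
  refine Finset.sum_nbij' (fun a ↦ (a : ZMod n)) (fun x ↦ (x - 1).val + 1) (by simp) ?_ ?_
    (by simp) (fun _ _ ↦ rfl)
  · intro x _
    simp [(x - 1).val_lt]
  · intro a ha
    obtain ⟨hle, hlt⟩ := Finset.mem_Icc.mp ha
    obtain ⟨b, rfl⟩ := Nat.exists_eq_add_of_le' hle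
    simp [val_natCast_of_lt hlt]

theorem sum_Icc_one_mul_eexp {n : ℕ} [NeZero n] (χ : DirichletCharacter ℂ n) (k : ℤ) :
    ∑ a ∈ Finset.Icc 1 n, χ a * eexp (a * k / n) =
      gaussSum χ (stdAddChar.mulShift (k : ZMod n)) := by
  have heexp (a : ℕ) : eexp (a * k / n) = stdAddChar.mulShift (k : ZMod n) a := by
    rw [AddChar.mulShift_apply, ← Int.cast_natCast (R := ZMod n) a, ← Int.cast_mul, stdAddChar_coe,
      eexp]
    push_cast
    ring_nf
  simp only [heexp, gaussSum, sum_Icc_one_natCast fun x ↦ χ x * stdAddChar.mulShift (k : ZMod n) x]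

theorem gaussSum_changeLevel_inv_mul_gaussSum_changeLevel {m n : ℕ} [NeZero m] [NeZero n]
    (hmn : m.Coprime n) (hn : Squarefree n) {χ : DirichletCharacter ℂ m} (hχ : χ.IsPrimitive)
    (k : ℤ) :
    gaussSum (changeLevel (dvd_mul_right m n) χ)⁻¹ stdAddChar *
        gaussSum (changeLevel (dvd_mul_right m n) χ) (stdAddChar.mulShift (-k : ZMod (m * n))) =
      m * χ⁻¹ k * (μ (Int.gcd n k) * φ n / φ (n / Int.gcd n k)) := by
  have hunit : IsUnit (n : ZMod m) := (isUnit_iff_coprime n m).mpr hmn.symm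
  have hinv := gaussSum_changeLevel_of_coprime hmn χ⁻¹ 1
  have hshift := gaussSum_changeLevel_of_coprime hmn χ (-k)
  rw [map_inv, Int.cast_one, Int.cast_one, AddChar.mulShift_one, AddChar.mulShift_one] at hinv
  rw [Int.cast_neg, Int.cast_neg] at hshift
  calc _ = χ⁻¹ n * χ n *
          (gaussSum χ⁻¹ stdAddChar * gaussSum χ (stdAddChar.mulShift (-k : ZMod m))) *
          (ramanujanSum n 1 * ramanujanSum n (-k)) := by
        rw [hinv, hshift]
        ring
    _ = m * χ⁻¹ k * (μ (Int.gcd n k) * φ n / φ (n / Int.gcd n k)) := by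
        rw [inv_apply_mul_apply_of_isUnit χ hunit, one_mul,
          gaussSum_inv_mul_gaussSum_mulShift_neg hχ (isPrimitive_stdAddChar m),
          ramanujanSum_one_mul_ramanujanSum_of_squarefree hn, Int.gcd_neg]

open ArithmeticFunction in
/-- The Gauss sum identity (3.5): for `χ` the character modulo `q = q₁ q₂` (with `q₂`
squarefree coprime to `q₁`) induced by a primitive character `χ₁` modulo `q₁`, and any
integer `k`,
`(τ(χ̄)/φ(q)) ∑_{a=1}^{q} χ(a) e(-ak/q)
  = (q₁/φ(q₁)) μ((q₂,k)) χ̄₁(k) / φ(q₂/(q₂,k))`. -/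
theorem gauss_sum_identity (q₁ q₂ : ℕ) (hq₁ : 0 < q₁) (hq₂ : 0 < q₂)
    (hco : Nat.Coprime q₁ q₂) (hsf : Squarefree q₂) (q : ℕ) (hq : q = q₁ * q₂)
    (χ₁ : DirichletCharacter ℂ q₁) (hχ₁ : χ₁.IsPrimitive)
    (χ : ℤ → ℂ) (hχ : ∀ a : ℤ, χ a = if Int.gcd a q = 1 then χ₁ (a : ZMod q₁) else 0)
    (k : ℤ) :
    ((∑ m ∈ Finset.Icc 1 q, (starRingEnd ℂ) (χ m) * eexp ((m : ℝ) / q)) /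
        (Nat.totient q : ℂ)) *
      (∑ a ∈ Finset.Icc 1 q, χ a * eexp (-((a : ℝ) * k / q)))
    = ((q₁ : ℂ) / (Nat.totient q₁ : ℂ)) *
        ((moebius (Int.gcd (q₂ : ℤ) k) : ℤ) : ℂ) *
        (starRingEnd ℂ) (χ₁ (k : ZMod q₁)) /
        (Nat.totient (q₂ / Int.gcd (q₂ : ℤ) k) : ℂ) := by
  subst hq
  have : NeZero q₁ := ⟨hq₁.ne'⟩
  have : NeZero q₂ := ⟨hq₂.ne'⟩
  have hχ_eq (a : ℕ) : χ a = changeLevel (dvd_mul_right q₁ q₂) χ₁ a := by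
    rw [hχ, ← changeLevel_intCast_apply, Int.cast_natCast]
  have hχ_inv (a : ℕ) : (starRingEnd ℂ) (χ a) = (changeLevel (dvd_mul_right q₁ q₂) χ₁)⁻¹ a := by
    rw [hχ_eq, starRingEnd_apply, MulChar.star_apply']
  have hτ := sum_Icc_one_mul_eexp (changeLevel (dvd_mul_right q₁ q₂) χ₁)⁻¹ 1
  have hsum := sum_Icc_one_mul_eexp (changeLevel (dvd_mul_right q₁ q₂) χ₁) (-k)
  simp only [← hχ_inv, Int.cast_one, mul_one, AddChar.mulShift_one] at hτ
  simp only [← hχ_eq, Int.cast_neg, mul_neg, neg_div] at hsum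
  have hφ : (φ q₂ : ℂ) ≠ 0 := Nat.cast_ne_zero.mpr (Nat.totient_pos.mpr hq₂).ne'
  rw [div_mul_eq_mul_div, hτ, hsum, Nat.totient_mul hco, starRingEnd_apply, MulChar.star_apply',
    gaussSum_changeLevel_inv_mul_gaussSum_changeLevel hco hsf hχ₁, Nat.cast_mul]
  field_simp
end
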